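/- arXiv:1401.5653 — 5 statements merged into one kernel-verified Lean document; each statement's English description precedes it below -/
import Mathlib

section
/- For every positive integer n and all nonnegative integers j and k, the number of permutations π of {1,...,n} with des(π) = j and ides(π) = k equals the number of inversion tables e of length n with asc(e) = j and row(e) = k. Equivalently, the double Eulerian polynomial satisfies A_n(u,v) = ∑_{π ∈ S_n} u^{des(π)} v^{des(π^{-1})} = ∑_{e ∈ I_n} u^{asc(e)} v^{row(e)}. -/
/-!
The refined statement `count_eq` holds: for every set `S`, as many permutations have `DES = S` and
`ides = k` as inversion tables have `ASC = S` and `row = k`. By Möbius inversion it is enough to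
compare the objects whose descent (ascent) set is contained in `S` (`count_subset_eq`).

Both kinds of object of length `m` are extended one entry at a time by choosing one of `m + 1`
options. Appending a last letter to `π` inserts a new largest letter into one of the `m + 1` gaps of
`π⁻¹`. The descent number `ides` is unchanged at a descent gap or the final gap and increases by one
at every other gap, so there are `ides(π) + 1` free gaps (`card_freeGaps_extend`). Appending an entry
to `e` chooses one of `m + 1` values, and `row` is unchanged exactly for the `row(e) + 1` values in
`{1} ∪ ROW(e)`.

The bound on the descent or ascent set requires, at certain steps, that the next gap lie to the
right of the letter inserted last, respectively that the next value be at most the last one. Listing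
the gaps from left to right and the values from largest to smallest, the two processes become the
same process on words of free and costly options (`perm_step`, `inv_step`): the chosen option becomes
free, the options before it are lost, and the chosen one and those after it remain. The words
themselves need not agree, but the number of ways to complete the process depends only on the number
of free and costly options in the word (`completions_perm`). This resets the process at the steps
without restriction, where the available options number `m + 1`, with one more than the current
statistic of them free. Hence both counts are computed by the one recursion `completions`.
-/

/-- The descent set of a permutation `π` of `{1,...,n}` (1-indexed):
`DES(π) = {i ∈ {1,...,n-1} : π_i > π_{i+1}}`.  Here `π_i` is `π ⟨i-1, _⟩`
since `Fin n` is 0-indexed. -/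
def permDES (n : ℕ) (π : Equiv.Perm (Fin n)) : Finset ℕ :=
  (Finset.Ico 1 n).filter fun i =>
    ∃ h : i < n, ∃ h' : i - 1 < n, π ⟨i, h⟩ < π ⟨i - 1, h'⟩

/-- `des(π)`, the number of descents of `π`. -/
def permDes (n : ℕ) (π : Equiv.Perm (Fin n)) : ℕ := (permDES n π).card

/-- `ides(π) = des(π⁻¹)`. -/
def permIdes (n : ℕ) (π : Equiv.Perm (Fin n)) : ℕ := permDes n π⁻¹

/-- `maj(π)`, the sum of the elements of `DES(π)`. -/
def permMaj (n : ℕ) (π : Equiv.Perm (Fin n)) : ℕ := ∑ i ∈ permDES n π, i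

/-- An inversion table of length `n`: a sequence `e_1 … e_n` with `1 ≤ e_i ≤ i`.
The entry `e_i` (for `1 ≤ i ≤ n`) is `e.1 ⟨i-1, _⟩`. -/
abbrev InvTable (n : ℕ) :=
  {e : Fin n → Fin (n + 1) // ∀ i : Fin n, 1 ≤ (e i : ℕ) ∧ (e i : ℕ) ≤ (i : ℕ) + 1}

/-- The ascent set `ASC(e) = {i ∈ {1,...,n-1} : e_i < e_{i+1}}`. -/
def invASC (n : ℕ) (e : InvTable n) : Finset ℕ :=
  (Finset.Ico 1 n).filter fun i =>
    ∃ h : i < n, ∃ h' : i - 1 < n, (e.1 ⟨i - 1, h'⟩ : ℕ) < (e.1 ⟨i, h⟩ : ℕ)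

/-- `asc(e)`, the number of ascents of `e`. -/
def invAsc (n : ℕ) (e : InvTable n) : ℕ := (invASC n e).card

/-- `ROW(e) = {e_i : 1 ≤ i ≤ n} \ {1}`. -/
def invROW (n : ℕ) (e : InvTable n) : Finset ℕ :=
  (Finset.image (fun i : Fin n => (e.1 i : ℕ)) Finset.univ) \ {1}

/-- `row(e) = #ROW(e)`. -/
def invRow (n : ℕ) (e : InvTable n) : ℕ := (invROW n e).card

/-- `amaj(e)`, the sum of the elements of `ASC(e)`. -/
def invAmaj (n : ℕ) (e : InvTable n) : ℕ := ∑ i ∈ invASC n e, i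

namespace DoubleEulerian

open Finset

/-! ### Words of free and costly options -/

/-- Sum over all ways of choosing one option from a word of options. An option is `true` if it
is free and `false` if it is costly; `d` counts the free options, and choosing a costly one raises
`d` by one. Then `f` receives the new `d` and the options strictly after the chosen one. -/
def pick (f : ℕ → List Bool → ℕ) (d : ℕ) : List Bool → ℕ
  | [] => 0
  | c :: L => f (if c then d else d + 1) L + pick f d L

/-- The number of ways to complete an object of length `n`. The list `T` has one bit for every
entry still to be appended, and `L` is the word of options compatible with the previous entry.
With bit `true` the next option must come from `L`; with bit `false` it may be any of the
`n + 1` options, of which `d` are free. In both cases a chosen option becomes free and stays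
available. A completion counts if there are `k + 1` free options at the end. The unrestricted
options are listed in an arbitrary order, which is harmless by `completions_perm`. -/
def completions (k : ℕ) : List Bool → ℕ → ℕ → List Bool → ℕ
  | [], _, d, _ => if d = k + 1 then 1 else 0
  | true :: T, n, d, L => pick (fun d' L' => completions k T (n + 1) d' (true :: L')) d L
  | false :: T, n, d, _ => pick (fun d' L' => completions k T (n + 1) d' (true :: L')) d
      (List.replicate d true ++ List.replicate (n + 1 - d) false)

/-- The identity behind the symmetry of `completions` in its word: it is what is needed to swap
an adjacent free option and costly option. -/
lemma completions_exchange (k : ℕ) (T : List Bool) (n d : ℕ) (L : List Bool) :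
    completions k T n (d + 1) (true :: true :: L) + completions k T n d (true :: L) =
      completions k T n d (true :: false :: L) + completions k T n (d + 1) (true :: L) := by
  induction T generalizing n with
  | nil => simp only [completions]; omega
  | cons b T ih =>
    cases b with
    | false => simp only [completions]; omega
    | true =>
      have := ih (n + 1)
      simp only [completions, pick] at this ⊢
      simp only [if_true, Bool.false_eq_true, if_false]
      omega

lemma pick_perm {f : ℕ → List Bool → ℕ}
    (hf : ∀ d L L', L.Perm L' → f d L = f d L')
    (hx : ∀ d L, f (d + 1) (true :: L) + f d L = f d (false :: L) + f (d + 1) L)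
    (d : ℕ) {L L' : List Bool} (h : L.Perm L') : pick f d L = pick f d L' := by
  induction h with
  | nil => rfl
  | cons c h ih => simp only [pick, ih, hf _ _ _ h]
  | swap c c' L =>
    have := hx d L
    cases c <;> cases c' <;> simp [pick] <;> omega
  | trans _ _ ih₁ ih₂ => exact ih₁.trans ih₂

/-- The number of completions depends only on how many available options are free and how many
are costly, not on their order. -/
lemma completions_perm (k : ℕ) (T : List Bool) (n d : ℕ) {L L' : List Bool} (h : L.Perm L') :
    completions k T n d L = completions k T n d L' := by
  induction T generalizing n d L L' with
  | nil => rfl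
  | cons b T ih =>
    cases b with
    | false => rfl
    | true =>
      simp only [completions]
      exact pick_perm (f := fun d' L' => completions k T (n + 1) d' (true :: L'))
        (fun d L L' h => ih _ _ (h.cons _))
        (fun d L => completions_exchange k T (n + 1) d L) d h

lemma labels_perm (D : Finset ℕ) (l : List ℕ) (hl : l.Nodup) (hD : ∀ y ∈ D, y ∈ l) :
    (l.map fun y => decide (y ∈ D)).Perm
      (List.replicate #D true ++ List.replicate (l.length - #D) false) := by
  have hc : (l.map fun y => decide (y ∈ D)).count true = #D := by
    rw [List.count_eq_countP, List.countP_map, List.countP_eq_length_filter,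
      ← List.toFinset_card_of_nodup (hl.filter _)]
    congr 1
    ext y
    simp only [List.mem_toFinset, List.mem_filter, Function.comp]
    constructor
    · rintro ⟨-, h⟩; simpa using h
    · intro h; exact ⟨hD y h, by simpa using h⟩
  have ht := List.count_not_add_count (l.map fun y => decide (y ∈ D)) true
  simp only [Bool.not_true, List.length_map] at ht
  rw [List.perm_iff_count]
  intro b
  cases b
  · simp [List.count_append, List.count_replicate]; omega
  · simp [List.count_append, List.count_replicate, hc]

/-- Unfolds one step of `completions`, with the unrestricted options listed in any order `l`
in which they naturally occur. -/
lemma completions_cons (k : ℕ) (b : Bool) (T : List Bool) (n : ℕ) (D : Finset ℕ) (L : List Bool)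
    (l : List ℕ) (hl : l.Nodup) (hD : ∀ y ∈ D, y ∈ l) (hn : l.length = n + 1) :
    completions k (b :: T) n #D L =
      pick (fun d' L' => completions k T (n + 1) d' (true :: L')) #D
        (if b then L else l.map fun y => decide (y ∈ D)) := by
  cases b with
  | true => rfl
  | false =>
    simp only [completions, Bool.false_eq_true, if_false]
    refine (pick_perm (f := fun d' L' => completions k T (n + 1) d' (true :: L'))
        (fun d L L' h => completions_perm _ _ _ _ (h.cons _))
        (fun d L => completions_exchange k T (n + 1) d L) _ ?_).symm
    rw [← hn]
    exact labels_perm D l hl hD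

lemma pick_range' (f : ℕ → List Bool → ℕ) (d : ℕ) (p : ℕ → Bool) (a s : ℕ) :
    pick f d ((List.range' a s).map p) =
      ∑ x ∈ Ico a (a + s), f (if p x then d else d + 1)
        ((List.range' (x + 1) (a + s - 1 - x)).map p) := by
  induction s generalizing a with
  | zero => simp [pick]
  | succ s ih =>
    rw [List.range'_succ, List.map_cons, pick, ih,
      Finset.sum_eq_sum_Ico_succ_bot (show a < a + (s + 1) by omega),
      show a + 1 + s = a + (s + 1) by omega, show a + (s + 1) - 1 - a = s by omega]

lemma pick_reverse_range' (f : ℕ → List Bool → ℕ) (d : ℕ) (p : ℕ → Bool) (s : ℕ) :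
    pick f d ((List.range' 1 s).reverse.map p) =
      ∑ x ∈ range s, f (if p (x + 1) then d else d + 1)
        ((List.range' 1 x).reverse.map p) := by
  induction s with
  | zero => simp [pick]
  | succ s ih =>
    rw [List.range'_concat, List.reverse_append, List.reverse_singleton, List.singleton_append,
      List.map_cons, pick, ih, Finset.sum_range_succ, add_comm]
    simp [add_comm]

/-! ### Permutations -/

/-- Appends a last letter `x` to the word of `π`, raising by one the letters that are at least
`x`. In terms of `π⁻¹` this inserts a new largest letter just before position `x`. -/
def extend {m : ℕ} (π : Equiv.Perm (Fin m)) (x : Fin (m + 1)) : Equiv.Perm (Fin (m + 1)) :=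
  (finSuccEquiv' (Fin.last m)).trans ((Equiv.optionCongr π).trans (finSuccEquiv' x).symm)

@[simp] lemma extend_last {m : ℕ} (π : Equiv.Perm (Fin m)) (x : Fin (m + 1)) :
    extend π x (Fin.last m) = x := by
  simp [extend]

@[simp] lemma extend_castSucc {m : ℕ} (π : Equiv.Perm (Fin m)) (x : Fin (m + 1)) (i : Fin m) :
    extend π x i.castSucc = x.succAbove (π i) := by
  simp [extend, ← Fin.succAbove_last]

lemma extend_inv_self {m : ℕ} (π : Equiv.Perm (Fin m)) (x : Fin (m + 1)) :
    (extend π x)⁻¹ x = Fin.last m := by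
  rw [Equiv.Perm.inv_eq_iff_eq, extend_last]

lemma extend_inv_succAbove {m : ℕ} (π : Equiv.Perm (Fin m)) (x : Fin (m + 1)) (v : Fin m) :
    (extend π x)⁻¹ (x.succAbove v) = (π⁻¹ v).castSucc := by
  rw [Equiv.Perm.inv_eq_iff_eq, extend_castSucc]; simp

lemma extend_bijective (m : ℕ) :
    Function.Bijective fun p : Equiv.Perm (Fin m) × Fin (m + 1) => extend p.1 p.2 := by
  rw [Fintype.bijective_iff_injective_and_card]
  constructor
  · rintro ⟨π, x⟩ ⟨σ, y⟩ h
    have h' : extend π x = extend σ y := h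
    have hxy : x = y := by rw [← extend_last π x, h', extend_last]
    subst hxy
    have : π = σ := by
      ext i
      have := congrArg (fun τ => τ i.castSucc) h'
      simp only [extend_castSucc] at this
      rw [Fin.succAbove_right_injective this]
    rw [this]
  · simp [Fintype.card_perm, Nat.factorial_succ, mul_comm]

lemma sum_perm_succ (m : ℕ) (F : Equiv.Perm (Fin (m + 1)) → ℕ) :
    ∑ π, F π = ∑ π : Equiv.Perm (Fin m), ∑ x, F (extend π x) := by
  rw [← Fintype.sum_prod_type']
  exact (Function.Bijective.sum_comp (extend_bijective m) F).symm

/-- The gaps `0, ..., m` of the word of `π⁻¹` (gap `y` lies just before position `y`) at which a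
new largest letter can be inserted without creating a descent: those inside a descent, and the
final gap `m`. -/
def freeGaps {m : ℕ} (π : Equiv.Perm (Fin m)) : Finset ℕ := insert m (permDES m π⁻¹)

lemma mem_permDES {m : ℕ} (π : Equiv.Perm (Fin m)) (i : ℕ) :
    i + 1 ∈ permDES m π ↔ ∃ h : i + 1 < m, π ⟨i + 1, h⟩ < π ⟨i, by omega⟩ := by
  simp only [permDES, mem_filter, mem_Ico, Nat.add_sub_cancel]
  constructor
  · rintro ⟨_, h, _, h'⟩; exact ⟨h, h'⟩
  · rintro ⟨h, h'⟩; exact ⟨⟨by omega, h⟩, h, by omega, h'⟩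

lemma zero_notMem_permDES {m : ℕ} (π : Equiv.Perm (Fin m)) : 0 ∉ permDES m π := by
  simp [permDES]

lemma card_freeGaps {m : ℕ} (π : Equiv.Perm (Fin m)) : #(freeGaps π) = permIdes m π + 1 := by
  rw [freeGaps, card_insert_of_notMem (by simp [permDES])]
  rfl

lemma freeGaps_le {m : ℕ} (π : Equiv.Perm (Fin m)) : ∀ y ∈ freeGaps π, y ≤ m := by
  intro y hy
  simp only [freeGaps, permDES, mem_insert, mem_filter, mem_Ico] at hy
  omega

/-- How old gaps are renumbered by an insertion at gap `x`: gaps before `x` stay, and `x` itself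
is sent to the gap just after the inserted letter. -/
def gapShift (x y : ℕ) : ℕ := if y < x then y else y + 1

lemma gapShift_injective (x : ℕ) : Function.Injective (gapShift x) := by
  intro a b h
  simp only [gapShift] at h
  split_ifs at h <;> omega

/-- After an insertion at `x`, the old free gaps remain free and so is the gap just after the
inserted largest letter, while the gap just before it is not. -/
lemma freeGaps_extend {m : ℕ} (π : Equiv.Perm (Fin (m + 1))) (x : Fin (m + 2)) :
    freeGaps (extend π x) = insert (x + 1 : ℕ) ((freeGaps π).image (gapShift x)) := by
  have hlt : ∀ (v : ℕ) (h : v < m + 1), v < (x : ℕ) →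
      (extend π x)⁻¹ ⟨v, by omega⟩ = (π⁻¹ ⟨v, h⟩).castSucc := by
    intro v h hv
    rw [← extend_inv_succAbove π x]
    congr 1
    rw [Fin.succAbove_of_castSucc_lt _ _ (by simpa [Fin.lt_def] using hv)]
    rfl
  have hge : ∀ (v : ℕ) (h : v < m + 1), (x : ℕ) ≤ v →
      (extend π x)⁻¹ ⟨v + 1, by omega⟩ = (π⁻¹ ⟨v, h⟩).castSucc := by
    intro v h hv
    rw [← extend_inv_succAbove π x]
    congr 1
    rw [Fin.succAbove_of_le_castSucc _ _ (by simpa [Fin.le_def] using hv)]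
    rfl
  have heq : ∀ (h : (x : ℕ) < m + 2), (extend π x)⁻¹ ⟨x, h⟩ = Fin.last (m + 1) := by
    intro h; exact extend_inv_self π x
  have hx := x.2
  have hsh : ∀ y, y ∈ (freeGaps π).image (gapShift x) ↔
      (y < x ∧ y ∈ freeGaps π) ∨ ((x : ℕ) < y ∧ y - 1 ∈ freeGaps π) := by
    intro y
    simp only [mem_image, gapShift]
    constructor
    · rintro ⟨a, ha, rfl⟩
      split_ifs with h
      · exact Or.inl ⟨h, ha⟩
      · exact Or.inr ⟨by omega, by simpa using ha⟩
    · rintro (⟨h, ha⟩ | ⟨h, ha⟩)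
      · exact ⟨y, ha, by rw [if_pos h]⟩
      · exact ⟨y - 1, ha, by rw [if_neg (by omega)]; omega⟩
  ext y
  rw [mem_insert, hsh]
  obtain _ | y := y
  · simp [freeGaps, zero_notMem_permDES]
  simp only [freeGaps, mem_insert, mem_permDES, Nat.add_sub_cancel]
  rcases lt_trichotomy (y + 1) (x : ℕ) with h | h | h
  · have e : ∀ h' : y + 1 < m + 1, ((extend π x)⁻¹ ⟨y + 1, by omega⟩ <
        (extend π x)⁻¹ ⟨y, by omega⟩ ↔ π⁻¹ ⟨y + 1, h'⟩ < π⁻¹ ⟨y, by omega⟩) := by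
      intro h'
      rw [hlt _ h' h, hlt y (by omega) (by omega), Fin.castSucc_lt_castSucc_iff]
    have : y + 1 < m + 1 := by omega
    simp only [this, e, exists_true_left, h, true_and]
    constructor
    · rintro (h1 | ⟨h1, h2⟩)
      · omega
      · exact Or.inr (Or.inl (Or.inr h2))
    · rintro (h1 | (h1 | h1) | h1)
      · omega
      · omega
      · exact Or.inr ⟨by omega, h1⟩
      · omega
  · constructor
    · rintro (h1 | ⟨h1, h2⟩)
      · omega
      · exfalso
        simp only [h, heq] at h2
        exact absurd (Fin.le_last _) (not_le.mpr h2)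
    · rintro (h1 | h1 | h1) <;> omega
  · rcases Nat.lt_or_ge (x : ℕ) y with hxy | hxy
    · obtain _ | y := y
      · omega
      rw [mem_permDES]
      constructor
      · rintro (h1 | ⟨h1, h2⟩)
        · exact Or.inr (Or.inr ⟨h, Or.inl (by omega)⟩)
        · rw [hge _ (by omega) (by omega), hge y (by omega) (by omega),
            Fin.castSucc_lt_castSucc_iff] at h2
          exact Or.inr (Or.inr ⟨h, Or.inr ⟨by omega, h2⟩⟩)
      · rintro (h1 | h1 | ⟨-, h1 | ⟨h1, h2⟩⟩)
        · omega
        · omega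
        · left; omega
        · refine Or.inr ⟨by omega, ?_⟩
          rw [hge _ (by omega) (by omega), hge y (by omega) (by omega),
            Fin.castSucc_lt_castSucc_iff]
          exact h2
    · obtain rfl : (x : ℕ) = y := by omega
      simp only [true_or, iff_true]
      by_cases hm : (x : ℕ) + 1 = m + 1 + 1
      · exact Or.inl hm
      · refine Or.inr ⟨by omega, ?_⟩
        rw [heq, hge _ (by omega) le_rfl]
        exact Fin.castSucc_lt_last _

lemma card_freeGaps_extend {m : ℕ} (π : Equiv.Perm (Fin (m + 1))) (x : Fin (m + 2)) :
    #(freeGaps (extend π x)) =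
      if (x : ℕ) ∈ freeGaps π then #(freeGaps π) else #(freeGaps π) + 1 := by
  have hx : gapShift x x = x + 1 := by simp [gapShift]
  rw [freeGaps_extend, ← hx]
  split_ifs with h
  · rw [insert_eq_of_mem (mem_image_of_mem _ h), card_image_of_injective _ (gapShift_injective x)]
  · rw [card_insert_of_notMem, card_image_of_injective _ (gapShift_injective x)]
    rwa [Function.Injective.mem_finset_image (gapShift_injective x)]

/-- The gaps strictly to the right of the last letter of `π`, recorded as free or costly: these
are the letters that can be appended to `π` without creating a descent. -/
def gapWord {m : ℕ} (π : Equiv.Perm (Fin (m + 1))) : List Bool :=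
  (List.range' (π (Fin.last m) + 1) (m + 1 - π (Fin.last m))).map fun y => decide (y ∈ freeGaps π)

lemma gapWord_extend {m : ℕ} (π : Equiv.Perm (Fin (m + 1))) (x : Fin (m + 2)) :
    gapWord (extend π x) = true ::
      (List.range' (x + 1) (m + 1 - x)).map fun y => decide (y ∈ freeGaps π) := by
  have hx := x.2
  rw [gapWord, extend_last, show m + 1 + 1 - (x : ℕ) = (m + 1 - x) + 1 by omega,
    List.range'_succ, List.map_cons, add_comm (x + 1 : ℕ) 1,
    ← List.map_add_range', List.map_map, freeGaps_extend]
  congr 1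
  · simp
  · refine List.map_congr_left fun y hy => ?_
    rw [List.mem_range'_1] at hy
    have : gapShift x y = 1 + y := by simp only [gapShift]; rw [if_neg (by omega)]; omega
    have hmem : 1 + y ∈ (freeGaps π).image (gapShift x) ↔ y ∈ freeGaps π := by
      rw [← this, Function.Injective.mem_finset_image (gapShift_injective x)]
    have hne : 1 + y ≠ x + 1 := by omega
    simp only [Function.comp, mem_insert, hmem, hne, false_or]

lemma permDES_extend_subset {m : ℕ} (π : Equiv.Perm (Fin (m + 1))) (x : Fin (m + 2))
    (S : Finset ℕ) : permDES (m + 2) (extend π x) ⊆ S ↔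
      permDES (m + 1) π ⊆ S ∧ (m + 1 ∉ S → (π (Fin.last m) : ℕ) < x) := by
  have hlt : ∀ (i : ℕ) (h : i < m + 1), extend π x ⟨i, by omega⟩ = x.succAbove (π ⟨i, h⟩) :=
    fun i h => extend_castSucc π x ⟨i, h⟩
  have hlast : ∀ h, extend π x ⟨m + 1, h⟩ = x := fun h => extend_last π x
  have key : x < x.succAbove (π (Fin.last m)) ↔ ¬ (π (Fin.last m) : ℕ) < x := by
    rw [Fin.lt_succAbove_iff_le_castSucc, Fin.le_def, not_lt]; rfl
  constructor
  · intro H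
    refine ⟨fun i hi => H ?_, fun hm => ?_⟩
    · obtain _ | i := i
      · exact absurd hi (zero_notMem_permDES _)
      rw [mem_permDES] at hi ⊢
      obtain ⟨h, h'⟩ := hi
      refine ⟨by omega, ?_⟩
      rw [hlt _ h, hlt i (by omega)]
      exact (Fin.strictMono_succAbove x) h'
    · by_contra hc
      refine hm (H ?_)
      rw [mem_permDES]
      refine ⟨by omega, ?_⟩
      rw [hlast, hlt m (by omega)]
      exact key.2 hc
  · rintro ⟨H, H'⟩ i hi
    obtain _ | i := i
    · exact absurd hi (zero_notMem_permDES _)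
    rw [mem_permDES] at hi
    obtain ⟨h, h'⟩ := hi
    rcases Nat.lt_or_ge i m with him | him
    · apply H
      rw [mem_permDES]
      refine ⟨by omega, ?_⟩
      rw [hlt (i + 1) (by omega), hlt i (by omega)] at h'
      exact (Fin.strictMono_succAbove x).lt_iff_lt.1 h'
    · obtain rfl : i = m := by omega
      by_contra hc
      rw [hlast, hlt i (by omega)] at h'
      exact key.1 h' (H' hc)

/-- Appending one letter to `π`, with a descent forbidden when `m + 1 ∉ S`, is one step of
`completions`. -/
lemma perm_step (k : ℕ) (S : Finset ℕ) (T : List Bool) {m : ℕ} (π : Equiv.Perm (Fin (m + 1))) :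
    (∑ x : Fin (m + 2), if (m + 1 ∉ S → (π (Fin.last m) : ℕ) < x) then
      completions k T (m + 2) #(freeGaps (extend π x)) (gapWord (extend π x)) else 0) =
    completions k (decide (m + 1 ∉ S) :: T) (m + 1) #(freeGaps π) (gapWord π) := by
  rw [completions_cons k _ T (m + 1) (freeGaps π) _ (List.range' 0 (m + 2)) List.nodup_range'
    (fun y hy => by
      have := freeGaps_le π y hy
      rw [List.mem_range'_1]; omega) (by simp)]
  simp only [card_freeGaps_extend, gapWord_extend]
  rw [Fin.sum_univ_eq_sum_range (fun x => if (m + 1 ∉ S → (π (Fin.last m) : ℕ) < x) then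
      completions k T (m + 2) (if x ∈ freeGaps π then #(freeGaps π) else #(freeGaps π) + 1)
        (true :: (List.range' (x + 1) (m + 1 - x)).map fun y => decide (y ∈ freeGaps π)) else 0)
      (m + 2)]
  have hc := (π (Fin.last m)).2
  by_cases hS : m + 1 ∈ S
  · simp only [hS, not_true, false_imp_iff, if_true, decide_false, Bool.false_eq_true, if_false]
    rw [pick_range', zero_add, ← Finset.range_eq_Ico]
    refine sum_congr rfl fun x hx => ?_
    rw [show m + 2 - 1 - x = m + 1 - x by omega]
    simp
  · simp only [hS, not_false_eq_true, true_imp_iff, decide_true, if_true]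
    rw [gapWord, pick_range', ← sum_filter]
    refine sum_congr ?_ fun x hx => ?_
    · ext x; simp only [mem_filter, mem_range, mem_Ico]; omega
    · rw [show (π (Fin.last m) : ℕ) + 1 + (m + 1 - (π (Fin.last m) : ℕ)) - 1 - x = m + 1 - x by
        omega]
      simp

lemma perm_count (k : ℕ) (S : Finset ℕ) (r m : ℕ) :
    #{π : Equiv.Perm (Fin (m + r + 1)) | permDES _ π ⊆ S ∧ permIdes _ π = k} =
      ∑ π : Equiv.Perm (Fin (m + 1)), if permDES _ π ⊆ S then
        completions k ((List.range' (m + 1) r).map fun i => decide (i ∉ S)) (m + 1)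
          #(freeGaps π) (gapWord π) else 0 := by
  induction r generalizing m with
  | zero =>
    rw [card_filter]
    refine sum_congr rfl fun π _ => ?_
    simp only [List.range'_zero, List.map_nil, completions, card_freeGaps, Nat.add_right_cancel_iff,
      ite_and]
  | succ r ih =>
    rw [show m + (r + 1) = m + 1 + r by omega, ih (m + 1), sum_perm_succ]
    refine sum_congr rfl fun π _ => ?_
    simp only [permDES_extend_subset, ite_and]
    split_ifs with h
    · rw [List.range'_succ, List.map_cons, ← perm_step]
    · simp

/-! ### Inversion tables -/

/-- Appends the entry `x + 1` to an inversion table. -/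
def snoc {m : ℕ} (e : InvTable m) (x : Fin (m + 1)) : InvTable (m + 1) :=
  ⟨Fin.snoc (α := fun _ => Fin (m + 2)) (fun i => (e.1 i).castSucc) x.succ, by
    intro i
    refine Fin.lastCases ?_ (fun i => ?_) i
    · simp; omega
    · simpa using e.2 i⟩

lemma snoc_last {m : ℕ} (e : InvTable m) (x : Fin (m + 1)) :
    ((snoc e x).1 (Fin.last m) : ℕ) = x + 1 := by
  simp [snoc]

lemma snoc_castSucc {m : ℕ} (e : InvTable m) (x : Fin (m + 1)) (i : Fin m) :
    ((snoc e x).1 i.castSucc : ℕ) = e.1 i := by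
  simp [snoc]

lemma snoc_bijective (m : ℕ) :
    Function.Bijective fun p : InvTable m × Fin (m + 1) => snoc p.1 p.2 := by
  constructor
  · rintro ⟨e, x⟩ ⟨e', y⟩ h
    have h' : snoc e x = snoc e' y := h
    have hxy : x = y := by
      have := snoc_last e x
      rw [h', snoc_last] at this
      ext; omega
    have he : e = e' := by
      ext i
      rw [← snoc_castSucc e x, h', snoc_castSucc]
    rw [hxy, he]
  · intro e
    have hl := e.2 (Fin.last m)
    rw [Fin.val_last] at hl
    refine ⟨⟨⟨fun i => ⟨e.1 i.castSucc, ?_⟩, fun i => e.2 i.castSucc⟩,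
      ⟨e.1 (Fin.last m) - 1, by omega⟩⟩, ?_⟩
    · have := (e.2 i.castSucc).2
      rw [Fin.val_castSucc] at this
      omega
    · ext i
      refine Fin.lastCases ?_ (fun i => ?_) i
      · rw [snoc_last]; simp only; omega
      · rw [snoc_castSucc]

lemma sum_invTable_succ (m : ℕ) (F : InvTable (m + 1) → ℕ) :
    ∑ e, F e = ∑ e : InvTable m, ∑ x, F (snoc e x) := by
  rw [← Fintype.sum_prod_type']
  exact (Function.Bijective.sum_comp (snoc_bijective m) F).symm

/-- The values of `e` together with `1`; these are the values that can be appended without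
enlarging `ROW(e)`. -/
def usedValues {m : ℕ} (e : InvTable m) : Finset ℕ := insert 1 (invROW m e)

lemma card_usedValues {m : ℕ} (e : InvTable m) : #(usedValues e) = invRow m e + 1 := by
  rw [usedValues, card_insert_of_notMem (by simp [invROW])]
  rfl

lemma mem_usedValues {m : ℕ} (e : InvTable m) (y : ℕ) :
    y ∈ usedValues e ↔ y = 1 ∨ ∃ i, (e.1 i : ℕ) = y := by
  simp only [usedValues, invROW, mem_insert, mem_sdiff, mem_image, mem_univ, true_and,
    mem_singleton]
  tauto

lemma usedValues_bounds {m : ℕ} (e : InvTable m) : ∀ y ∈ usedValues e, 1 ≤ y ∧ y ≤ m + 1 := by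
  intro y hy
  rw [mem_usedValues] at hy
  rcases hy with rfl | ⟨i, rfl⟩
  · omega
  · have := e.2 i
    omega

lemma usedValues_snoc {m : ℕ} (e : InvTable m) (x : Fin (m + 1)) :
    usedValues (snoc e x) = insert (x + 1 : ℕ) (usedValues e) := by
  ext y
  rw [mem_insert, mem_usedValues, mem_usedValues, Fin.exists_fin_succ']
  simp only [snoc_last, snoc_castSucc]
  constructor
  · rintro (h | h | h)
    · exact Or.inr (Or.inl h)
    · exact Or.inr (Or.inr h)
    · exact Or.inl h.symm
  · rintro (h | h | h)
    · exact Or.inr (Or.inr h.symm)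
    · exact Or.inl h
    · exact Or.inr (Or.inl h)

/-- The values `c, c - 1, ..., 1`, where `c` is the last entry of `e`, recorded as used or unused:
these are the values that can be appended to `e` without creating an ascent. -/
def valueWord {m : ℕ} (e : InvTable (m + 1)) : List Bool :=
  (List.range' 1 (e.1 (Fin.last m))).reverse.map fun y => decide (y ∈ usedValues e)

lemma valueWord_snoc {m : ℕ} (e : InvTable (m + 1)) (x : Fin (m + 2)) :
    valueWord (snoc e x) = true ::
      (List.range' 1 x).reverse.map fun y => decide (y ∈ usedValues e) := by
  rw [valueWord, snoc_last, List.range'_concat, List.reverse_append, List.reverse_singleton,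
    List.singleton_append, List.map_cons, usedValues_snoc]
  congr 1
  · simp [add_comm]
  · refine List.map_congr_left fun y hy => ?_
    rw [List.mem_reverse, List.mem_range'_1] at hy
    have : y ≠ x + 1 := by omega
    simp [this]

lemma mem_invASC {m : ℕ} (e : InvTable m) (i : ℕ) :
    i + 1 ∈ invASC m e ↔ ∃ h : i + 1 < m, (e.1 ⟨i, by omega⟩ : ℕ) < e.1 ⟨i + 1, h⟩ := by
  simp only [invASC, mem_filter, mem_Ico, Nat.add_sub_cancel]
  constructor
  · rintro ⟨_, h, _, h'⟩; exact ⟨h, h'⟩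
  · rintro ⟨h, h'⟩; exact ⟨⟨by omega, h⟩, h, by omega, h'⟩

lemma zero_notMem_invASC {m : ℕ} (e : InvTable m) : 0 ∉ invASC m e := by
  simp [invASC]

lemma invASC_snoc_subset {m : ℕ} (e : InvTable (m + 1)) (x : Fin (m + 2)) (S : Finset ℕ) :
    invASC (m + 2) (snoc e x) ⊆ S ↔
      invASC (m + 1) e ⊆ S ∧ (m + 1 ∉ S → (x : ℕ) < e.1 (Fin.last m)) := by
  have hlt : ∀ (i : ℕ) (h : i < m + 1), ((snoc e x).1 ⟨i, by omega⟩ : ℕ) = e.1 ⟨i, h⟩ :=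
    fun i h => snoc_castSucc e x ⟨i, h⟩
  have hlast : ∀ h, ((snoc e x).1 ⟨m + 1, h⟩ : ℕ) = x + 1 := fun h => snoc_last e x
  have hm : ∀ h, e.1 ⟨m, h⟩ = e.1 (Fin.last m) := fun h => rfl
  constructor
  · intro H
    refine ⟨fun i hi => H ?_, fun hS => ?_⟩
    · obtain _ | i := i
      · exact absurd hi (zero_notMem_invASC _)
      rw [mem_invASC] at hi ⊢
      obtain ⟨h, h'⟩ := hi
      refine ⟨by omega, ?_⟩
      rwa [hlt _ h, hlt i (by omega)]
    · by_contra hc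
      refine hS (H ?_)
      rw [mem_invASC]
      refine ⟨by omega, ?_⟩
      rw [hlast, hlt m (by omega), hm]
      omega
  · rintro ⟨H, H'⟩ i hi
    obtain _ | i := i
    · exact absurd hi (zero_notMem_invASC _)
    rw [mem_invASC] at hi
    obtain ⟨h, h'⟩ := hi
    rcases Nat.lt_or_ge i m with him | him
    · apply H
      rw [mem_invASC]
      refine ⟨by omega, ?_⟩
      rwa [hlt (i + 1) (by omega), hlt i (by omega)] at h'
    · obtain rfl : i = m := by omega
      by_contra hc
      have := H' hc
      rw [hlast, hlt i (by omega), hm] at h'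
      omega

/-- Appending one entry to `e`, with an ascent forbidden when `m + 1 ∉ S`, is one step of
`completions`. -/
lemma inv_step (k : ℕ) (S : Finset ℕ) (T : List Bool) {m : ℕ} (e : InvTable (m + 1)) :
    (∑ x : Fin (m + 2), if (m + 1 ∉ S → (x : ℕ) < e.1 (Fin.last m)) then
      completions k T (m + 2) #(usedValues (snoc e x)) (valueWord (snoc e x)) else 0) =
    completions k (decide (m + 1 ∉ S) :: T) (m + 1) #(usedValues e) (valueWord e) := by
  rw [completions_cons k _ T (m + 1) (usedValues e) _ (List.range' 1 (m + 2)).reverse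
    (List.nodup_reverse.2 List.nodup_range')
    (fun y hy => by
      have := usedValues_bounds e y hy
      rw [List.mem_reverse, List.mem_range'_1]; omega) (by simp)]
  simp only [usedValues_snoc, card_insert_eq_ite, valueWord_snoc]
  rw [Fin.sum_univ_eq_sum_range (fun x => if (m + 1 ∉ S → x < (e.1 (Fin.last m) : ℕ)) then
      completions k T (m + 2) (if x + 1 ∈ usedValues e then #(usedValues e)
        else #(usedValues e) + 1)
        (true :: (List.range' 1 x).reverse.map fun y => decide (y ∈ usedValues e)) else 0)
      (m + 2)]
  have hc := (e.2 (Fin.last m)).2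
  rw [Fin.val_last] at hc
  by_cases hS : m + 1 ∈ S
  · simp only [hS, not_true, false_imp_iff, if_true, decide_false, Bool.false_eq_true, if_false]
    rw [pick_reverse_range']
    simp
  · simp only [hS, not_false_eq_true, true_imp_iff, decide_true, if_true]
    rw [valueWord, pick_reverse_range', ← sum_filter]
    refine sum_congr ?_ fun x hx => ?_
    · ext x; simp only [mem_filter, mem_range]; omega
    · simp

lemma inv_count (k : ℕ) (S : Finset ℕ) (r m : ℕ) :
    #{e : InvTable (m + r + 1) | invASC _ e ⊆ S ∧ invRow _ e = k} =
      ∑ e : InvTable (m + 1), if invASC _ e ⊆ S then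
        completions k ((List.range' (m + 1) r).map fun i => decide (i ∉ S)) (m + 1)
          #(usedValues e) (valueWord e) else 0 := by
  induction r generalizing m with
  | zero =>
    rw [card_filter]
    refine sum_congr rfl fun e _ => ?_
    simp only [List.range'_zero, List.map_nil, completions, card_usedValues,
      Nat.add_right_cancel_iff, ite_and]
  | succ r ih =>
    rw [show m + (r + 1) = m + 1 + r by omega, ih (m + 1), sum_invTable_succ]
    refine sum_congr rfl fun e _ => ?_
    simp only [invASC_snoc_subset, ite_and]
    split_ifs with h
    · rw [List.range'_succ, List.map_cons, ← inv_step]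
    · simp

/-! ### Comparison of the two counts -/

/-- Both sides equal the same value of `completions`, since the unique objects of length one
have the same word of options. -/
lemma count_subset_eq (k : ℕ) (S : Finset ℕ) (r : ℕ) :
    #{π : Equiv.Perm (Fin (r + 1)) | permDES _ π ⊆ S ∧ permIdes _ π = k} =
      #{e : InvTable (r + 1) | invASC _ e ⊆ S ∧ invRow _ e = k} := by
  have hP := perm_count k S r 0
  have hI := inv_count k S r 0
  rw [zero_add] at hP hI
  rw [hP, hI]
  have h1 : ∀ π : Equiv.Perm (Fin (0 + 1)), permDES _ π = ∅ ∧ freeGaps π = {1} ∧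
      gapWord π = [true] := by decide
  have h2 : ∀ e : InvTable (0 + 1), invASC _ e = ∅ ∧ usedValues e = {1} ∧
      valueWord e = [true] := by decide
  simp only [h1, h2, empty_subset, if_true, sum_const]
  rfl

lemma card_filter_subset {α : Type*} [Fintype α] (p : α → Finset ℕ) (P : α → Prop)
    [DecidablePred P] (S : Finset ℕ) :
    #{a | p a ⊆ S ∧ P a} = #{a | p a = S ∧ P a} + ∑ U ∈ S.ssubsets, #{a | p a = U ∧ P a} := by
  have hsum : ∑ U ∈ S.powerset, #{a | p a = U ∧ P a} =
      #{a | p a = S ∧ P a} + ∑ U ∈ S.ssubsets, #{a | p a = U ∧ P a} :=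
    (Finset.add_sum_erase _ _ (mem_powerset_self S)).symm
  rw [← hsum, card_eq_sum_card_fiberwise (f := p) (t := S.powerset)
    (fun a ha => by simp at ha ⊢; exact ha.1)]
  refine sum_congr rfl fun U hU => ?_
  rw [mem_powerset] at hU
  congr 1
  ext a
  simp only [mem_filter, mem_univ, true_and]
  constructor
  · rintro ⟨⟨-, h⟩, h'⟩; exact ⟨h', h⟩
  · rintro ⟨rfl, h⟩; exact ⟨⟨hU, h⟩, rfl⟩

/-- Möbius inversion over subsets: the counts with prescribed descent or ascent set agree. -/
lemma count_eq (k r : ℕ) (S : Finset ℕ) :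
    #{π : Equiv.Perm (Fin (r + 1)) | permDES _ π = S ∧ permIdes _ π = k} =
      #{e : InvTable (r + 1) | invASC _ e = S ∧ invRow _ e = k} := by
  induction S using Finset.strongInduction with
  | H S ih =>
    have h := count_subset_eq k S r
    rw [card_filter_subset, card_filter_subset,
      sum_congr rfl fun U hU => ih U (mem_ssubsets.1 hU)] at h
    exact Nat.add_right_cancel h

lemma card_filter_card_eq {α : Type*} [Fintype α] (p : α → Finset ℕ) (P : α → Prop)
    [DecidablePred P] (r : ℕ) (hp : ∀ a, p a ⊆ Ico 1 r) (j : ℕ) :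
    #{a | #(p a) = j ∧ P a} = ∑ U ∈ powersetCard j (Ico 1 r), #{a | p a = U ∧ P a} := by
  rw [card_eq_sum_card_fiberwise (f := p) (t := powersetCard j (Ico 1 r))
    (fun a ha => by
      simp only [coe_filter, mem_univ, true_and, Set.mem_ofPred_eq] at ha
      exact mem_powersetCard.2 ⟨hp a, ha.1⟩)]
  refine sum_congr rfl fun U hU => ?_
  rw [mem_powersetCard] at hU
  congr 1
  ext a
  simp only [mem_filter, mem_univ, true_and]
  constructor
  · rintro ⟨⟨-, h⟩, h'⟩; exact ⟨h', h⟩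
  · rintro ⟨rfl, h⟩; exact ⟨⟨hU.2, h⟩, rfl⟩

end DoubleEulerian

/-- For every positive integer `n` and all nonnegative `j, k`, the number of
permutations of `{1,...,n}` with `des = j` and `ides = k` equals the number of
inversion tables of length `n` with `asc = j` and `row = k`. -/
theorem double_eulerian (n : ℕ) (hn : 0 < n) (j k : ℕ) :
    (Finset.univ.filter
      (fun π : Equiv.Perm (Fin n) => permDes n π = j ∧ permIdes n π = k)).card =
    (Finset.univ.filter
      (fun e : InvTable n => invAsc n e = j ∧ invRow n e = k)).card := by
  obtain ⟨r, rfl⟩ : ∃ r, n = r + 1 := ⟨n - 1, by omega⟩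
  refine (DoubleEulerian.card_filter_card_eq (permDES (r + 1)) (fun π => permIdes _ π = k) (r + 1)
    (fun π => Finset.filter_subset _ _) j).trans ?_
  refine Eq.trans ?_ (DoubleEulerian.card_filter_card_eq (invASC (r + 1))
    (fun e => invRow _ e = k) (r + 1) (fun e => Finset.filter_subset _ _) j).symm
  exact Finset.sum_congr rfl fun U _ => DoubleEulerian.count_eq k r U
end

section
/- For every positive integer n, the identity ∑_{π ∈ S_n} u^{DES(π)} v^{ides(π)} = ∑_{e ∈ I_n} u^{ASC(e)} v^{row(e)} holds, where u^S denotes ∏_{i ∈ S} u_i for indeterminates u_1, u_2, .... Equivalently, for every subset S ⊆ {1,...,n-1} and every nonnegative integer k, the number of permutations π of {1,...,n} with DES(π) = S and ides(π) = k equals the number of inversion tables e of length n with ASC(e) = S and row(e) = k. -/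
namespace DoubleEulerian

open Polynomial Finset

noncomputable section

open scoped Classical

/-! ### The value function and its exchange law -/

/-- The weighted sum of `F` over the choices of a site in a word made of `i` neutral sites followed by
`j` changing ones. The chosen site becomes neutral, the sites before it drop out of the word, and one
changing site is added to the totals `a` (neutral) and `b` (changing); choosing a changing site costs
a factor `X`. -/
def nd (F : ℕ → ℕ → ℕ → ℕ → ℤ[X]) (a b i j : ℕ) : ℤ[X] :=
  ∑ i' ∈ range i, F a (b + 1) (i' + 1) j + X * ∑ j' ∈ range j, F (a + 1) b 1 j'

/-- The exchange law: it makes the sum over choices independent of the order of the neutral and the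
changing sites. -/
def Exch (F : ℕ → ℕ → ℕ → ℕ → ℤ[X]) : Prop :=
  ∀ a b i j, F a (b + 1) i (j + 1) - F a (b + 1) i j
    = X * (F (a + 1) b (i + 1) j - F (a + 1) b i j)

lemma nd_succ_left (F : ℕ → ℕ → ℕ → ℕ → ℤ[X]) (a b i j : ℕ) :
    nd F a b (i + 1) j = nd F a b i j + F a (b + 1) (i + 1) j := by
  simp only [nd, sum_range_succ]; ring

/-- In the word defining `nd` the changing sites come last; by the exchange law a changing site may
also be put first. -/
lemma nd_succ_right {F : ℕ → ℕ → ℕ → ℕ → ℤ[X]} (hF : Exch F) (a b i j : ℕ) :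
    nd F a b i (j + 1) = nd F a b i j + X * F (a + 1) b (i + 1) j := by
  induction i with
  | zero => simp only [nd, sum_range_succ, range_zero, sum_empty]; ring
  | succ i ih =>
    rw [nd_succ_left, nd_succ_left, ih]
    linear_combination hF a b (i + 1) j

lemma nd_exch {F : ℕ → ℕ → ℕ → ℕ → ℤ[X]} (hF : Exch F) : Exch (nd F) := by
  intro a b i j
  rw [nd_succ_right hF, nd_succ_left]; ring

/-- The generating polynomial, in `X` marking `k`, of the continuations of an object that has `a` neutral
and `b` changing sites in all, `i` and `j` of which lie on the side of the last entry where no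
descent (resp. ascent) is created. The list prescribes, step by step, whether a descent (resp. ascent)
is created; sites that create one are counted as all sites minus the others. -/
def Q : List Bool → ℕ → ℕ → ℕ → ℕ → ℤ[X]
  | [], _, _, _, _ => 1
  | false :: s, a, b, i, j => nd (Q s) a b i j
  | true :: s, a, b, i, j => nd (Q s) a b a b - nd (Q s) a b i j

lemma Q_exch (s : List Bool) : Exch (Q s) := by
  induction s with
  | nil => intro a b i j; simp [Q]
  | cons c s ih =>
    intro a b i j
    cases c
    · exact nd_exch ih a b i j
    · simp only [Q]; linear_combination - nd_exch ih a b i j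

/-- The contribution of choosing one site, neutral if `N` holds, beyond which there remain `i` neutral
and `j` changing sites. -/
def stepTerm (F : ℕ → ℕ → ℕ → ℕ → ℤ[X]) (a b : ℕ) (N : Prop) (i j : ℕ) : ℤ[X] :=
  if N then F a (b + 1) (i + 1) j else X * F (a + 1) b (i + 1) j

/-- The sum over the sites `0, …, q - 1`, read downwards from the chosen site, depends only on how many
of them are neutral. Inversion tables use this form. -/
lemma nd_eq_sum_range {F : ℕ → ℕ → ℕ → ℕ → ℤ[X]} (hF : Exch F) (a b : ℕ) (t : ℕ → Prop)
    (q : ℕ) :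
    nd F a b (Nat.count t q) (Nat.count (fun y => ¬ t y) q)
      = ∑ x ∈ range q, stepTerm F a b (t x) (Nat.count t x) (Nat.count (fun y => ¬ t y) x) := by
  induction q with
  | zero => simp [nd]
  | succ q ih =>
    rw [sum_range_succ, ← ih, Nat.count_succ, Nat.count_succ]
    by_cases h : t q
    · simp [h, stepTerm, nd_succ_left]
    · simp [h, stepTerm, nd_succ_right hF]

/-- The number of `y` with `x ≤ y < n` satisfying `t`. -/
def cnt (n : ℕ) (t : ℕ → Prop) (x : ℕ) : ℕ := #{y ∈ Ico x n | t y}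

lemma cnt_of_lt {n x : ℕ} (t : ℕ → Prop) (h : x < n) :
    cnt n t x = cnt n t (x + 1) + if t x then 1 else 0 := by
  unfold cnt
  rw [← Finset.insert_Ico_add_one_left_eq_Ico h, filter_insert]
  split_ifs
  · rw [card_insert_of_notMem]; simp
  · simp

/-- The sum over the sites `q, …, n - 1`, read upwards from the chosen site. Permutations use this
form. -/
lemma nd_eq_sum_Ico {F : ℕ → ℕ → ℕ → ℕ → ℤ[X]} (hF : Exch F) (a b : ℕ) (t : ℕ → Prop)
    (n q : ℕ) (hq : q ≤ n) :
    nd F a b (cnt n t q) (cnt n (fun y => ¬ t y) q)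
      = ∑ x ∈ Ico q n, stepTerm F a b (t x) (cnt n t (x + 1)) (cnt n (fun y => ¬ t y) (x + 1)) := by
  induction hq using Nat.decreasingInduction with
  | self => simp [nd, cnt]
  | of_succ q hq ih =>
    rw [sum_eq_sum_Ico_succ_bot hq, ← ih, cnt_of_lt t hq, cnt_of_lt (fun y => ¬ t y) hq]
    by_cases h : t q
    · simp only [h, stepTerm, not_true, if_true, if_false, add_zero, nd_succ_left]; ring
    · simp only [h, stepTerm, not_false_eq_true, if_true, if_false, add_zero, nd_succ_right hF]; ring

/-! ### Permutations grown by appending a last value -/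

/-- The permutation whose last value is `x` and whose other values are in the same relative order as
those of `π`. On inverses, this inserts a new maximum in gap `x` of the word of `π⁻¹`. -/
def ins {m : ℕ} (x : Fin (m + 2)) (π : Equiv.Perm (Fin (m + 1))) : Equiv.Perm (Fin (m + 2)) :=
  (finSuccEquiv' (Fin.last (m + 1))).trans ((Equiv.optionCongr π).trans (finSuccEquiv' x).symm)

@[simp] lemma ins_last {m : ℕ} (x : Fin (m + 2)) (π : Equiv.Perm (Fin (m + 1))) :
    ins x π (Fin.last (m + 1)) = x := by
  simp [ins]

@[simp] lemma ins_castSucc {m : ℕ} (x : Fin (m + 2)) (π : Equiv.Perm (Fin (m + 1)))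
    (i : Fin (m + 1)) : ins x π i.castSucc = x.succAbove (π i) := by
  have := finSuccEquiv'_succAbove (Fin.last (m + 1)) i
  rw [Fin.succAbove_last_apply] at this
  simp [ins, this]

lemma ins_bijective (m : ℕ) : Function.Bijective
    (fun z : Equiv.Perm (Fin (m + 1)) × Fin (m + 2) => ins z.2 z.1) := by
  rw [Fintype.bijective_iff_injective_and_card]
  constructor
  · rintro ⟨π, x⟩ ⟨ρ, y⟩ h
    have h1 : x = y := by
      have := congrArg (fun f => f (Fin.last (m + 1))) h
      simpa using this
    subst h1
    simp only [Prod.mk.injEq, and_true]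
    ext1 i
    have := congrArg (fun f => f i.castSucc) h
    simpa using this
  · simp [Fintype.card_perm, Nat.factorial_succ]; ring

/-- The word of `π⁻¹` with values shifted to `1, …, m + 1`, extended by `0`, so that the gap at the end
of the word counts as a descent. -/
def invWord (m : ℕ) (π : Equiv.Perm (Fin (m + 1))) (g : ℕ) : ℕ :=
  if h : g < m + 1 then (π⁻¹ ⟨g, h⟩ : ℕ) + 1 else 0

lemma invWord_le (m : ℕ) (π : Equiv.Perm (Fin (m + 1))) (g : ℕ) : invWord m π g ≤ m + 1 := by
  unfold invWord
  split_ifs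
  · omega
  · omega

lemma invWord_ins_self {m : ℕ} (x : Fin (m + 2)) (π : Equiv.Perm (Fin (m + 1))) :
    invWord (m + 1) (ins x π) x = m + 2 := by
  have : (ins x π)⁻¹ x = Fin.last (m + 1) := by
    rw [Equiv.Perm.inv_eq_iff_eq]; simp
  rw [invWord, dif_pos (by omega), Fin.eta, this, Fin.val_last]

lemma invWord_ins_succAbove {m : ℕ} (x : Fin (m + 2)) (π : Equiv.Perm (Fin (m + 1)))
    (g : Fin (m + 1)) :
    invWord (m + 1) (ins x π) (x.succAbove g) = invWord m π g := by
  have : (ins x π)⁻¹ (x.succAbove g) = (π⁻¹ g).castSucc := by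
    rw [Equiv.Perm.inv_eq_iff_eq]; simp
  rw [invWord, invWord, dif_pos (by omega), dif_pos (by omega), Fin.eta, Fin.eta, this,
    Fin.val_castSucc]

lemma invWord_ins_lt {m : ℕ} (x : Fin (m + 2)) (π : Equiv.Perm (Fin (m + 1))) (g : ℕ)
    (hg : g < x) : invWord (m + 1) (ins x π) g = invWord m π g := by
  have := invWord_ins_succAbove x π ⟨g, by omega⟩
  rwa [Fin.succAbove_of_castSucc_lt _ _ (by simpa [Fin.lt_def] using hg)] at this

lemma invWord_ins_gt {m : ℕ} (x : Fin (m + 2)) (π : Equiv.Perm (Fin (m + 1))) (g : ℕ)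
    (hg : x ≤ g) : invWord (m + 1) (ins x π) (g + 1) = invWord m π g := by
  by_cases h : g < m + 1
  · have := invWord_ins_succAbove x π ⟨g, h⟩
    rwa [Fin.succAbove_of_le_castSucc _ _ (by simpa [Fin.le_def] using hg)] at this
  · rw [invWord, invWord, dif_neg (by omega), dif_neg h]

/-- Gap `g` (just before position `g`) of the word of `π⁻¹` is neutral if inserting a new maximum there
keeps the number of descents: it is the end gap or sits at a descent. -/
def neutral (m : ℕ) (π : Equiv.Perm (Fin (m + 1))) (g : ℕ) : Prop :=
  0 < g ∧ invWord m π g < invWord m π (g - 1)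

lemma neutral_ins_lt {m : ℕ} (x : Fin (m + 2)) (π : Equiv.Perm (Fin (m + 1))) (g : ℕ)
    (hg : g < x) : neutral (m + 1) (ins x π) g ↔ neutral m π g := by
  unfold neutral
  rw [invWord_ins_lt x π g hg, invWord_ins_lt x π (g - 1) (by omega)]

lemma neutral_ins_self {m : ℕ} (x : Fin (m + 2)) (π : Equiv.Perm (Fin (m + 1))) :
    ¬ neutral (m + 1) (ins x π) x := by
  rintro ⟨h, h'⟩
  rw [invWord_ins_self, invWord_ins_lt x π _ (by omega)] at h'
  have := invWord_le m π (x - 1)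
  omega

lemma neutral_ins_succ {m : ℕ} (x : Fin (m + 2)) (π : Equiv.Perm (Fin (m + 1))) :
    neutral (m + 1) (ins x π) (x + 1) := by
  refine ⟨by omega, ?_⟩
  rw [invWord_ins_gt x π _ le_rfl, Nat.add_sub_cancel, invWord_ins_self]
  have := invWord_le m π x
  omega

lemma neutral_ins_gt {m : ℕ} (x : Fin (m + 2)) (π : Equiv.Perm (Fin (m + 1))) (g : ℕ)
    (hg : x < g) : neutral (m + 1) (ins x π) (g + 1) ↔ neutral m π g := by
  obtain ⟨g, rfl⟩ : ∃ k, g = k + 1 := ⟨g - 1, by omega⟩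
  unfold neutral
  rw [invWord_ins_gt x π _ (by omega)]
  simp only [Nat.add_sub_cancel]
  rw [invWord_ins_gt x π _ (by omega)]
  simp

lemma cnt_congr_shift {n x : ℕ} {t u : ℕ → Prop} (h : ∀ g, x ≤ g → (u (g + 1) ↔ t g)) :
    cnt (n + 1) u (x + 1) = cnt n t x := by
  unfold cnt
  symm
  refine card_bij (fun y _ => y + 1) ?_ ?_ ?_
  · intro y hy
    simp only [mem_filter, mem_Ico] at hy ⊢
    exact ⟨by omega, (h y hy.1.1).2 hy.2⟩
  · intro y _ z _ hyz; omega
  · intro y hy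
    simp only [mem_filter, mem_Ico] at hy
    refine ⟨y - 1, ?_, by omega⟩
    simp only [mem_filter, mem_Ico]
    have := h (y - 1) (by omega)
    rw [show y - 1 + 1 = y by omega] at this
    exact ⟨by omega, this.1 hy.2⟩

lemma cnt_zero_split {n x : ℕ} (t : ℕ → Prop) (h : x ≤ n) :
    cnt n t 0 = cnt x t 0 + cnt n t x := by
  unfold cnt
  rw [← card_union_of_disjoint, ← filter_union, Ico_union_Ico_eq_Ico (by omega) h]
  exact disjoint_filter_filter (Ico_disjoint_Ico_consecutive 0 x n)

lemma cnt_congr {n x : ℕ} {t u : ℕ → Prop} (h : ∀ g, g < n → (u g ↔ t g)) :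
    cnt n u x = cnt n t x := by
  unfold cnt
  exact congrArg card (filter_congr fun g hg => h g (mem_Ico.1 hg).2)

lemma cnt_ins_after {m : ℕ} (x : Fin (m + 2)) (π : Equiv.Perm (Fin (m + 1))) :
    cnt (m + 3) (neutral (m + 1) (ins x π)) (x + 1) = cnt (m + 2) (neutral m π) (x + 1) + 1 := by
  rw [cnt_of_lt _ (by omega), if_pos (neutral_ins_succ x π),
    cnt_congr_shift (t := neutral m π) (fun g hg => neutral_ins_gt x π g (by omega))]

lemma cnt_ins_after_not {m : ℕ} (x : Fin (m + 2)) (π : Equiv.Perm (Fin (m + 1))) :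
    cnt (m + 3) (fun y => ¬ neutral (m + 1) (ins x π) y) (x + 1)
      = cnt (m + 2) (fun y => ¬ neutral m π y) (x + 1) := by
  rw [cnt_of_lt _ (by omega), if_neg (not_not.2 (neutral_ins_succ x π)),
    cnt_congr_shift (t := fun y => ¬ neutral m π y)
      (fun g hg => not_congr (neutral_ins_gt x π g (by omega))), add_zero]

lemma cnt_ins {m : ℕ} (x : Fin (m + 2)) (π : Equiv.Perm (Fin (m + 1))) :
    cnt (m + 3) (neutral (m + 1) (ins x π)) 0
      = cnt (m + 2) (neutral m π) 0 + if neutral m π x then 0 else 1 := by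
  rw [cnt_zero_split (x := x) _ (by omega), cnt_zero_split (n := m + 2) (x := x) _ (by omega),
    cnt_of_lt (n := m + 3) (x := x) _ (by omega), cnt_of_lt (n := m + 2) (x := x) _ (by omega),
    if_neg (neutral_ins_self x π), cnt_ins_after,
    cnt_congr (n := x) (fun g hg => neutral_ins_lt x π g hg)]
  split_ifs <;> omega

lemma cnt_ins_not {m : ℕ} (x : Fin (m + 2)) (π : Equiv.Perm (Fin (m + 1))) :
    cnt (m + 3) (fun y => ¬ neutral (m + 1) (ins x π) y) 0
      = cnt (m + 2) (fun y => ¬ neutral m π y) 0 + if neutral m π x then 1 else 0 := by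
  rw [cnt_zero_split (x := x) _ (by omega), cnt_zero_split (n := m + 2) (x := x) _ (by omega),
    cnt_of_lt (n := m + 3) (x := x) _ (by omega), cnt_of_lt (n := m + 2) (x := x) _ (by omega),
    if_pos (neutral_ins_self x π), cnt_ins_after_not,
    cnt_congr (n := x) (fun g hg => not_congr (neutral_ins_lt x π g hg))]
  split_ifs <;> omega

/-- The extra neutral gap is the one at the end of the word. -/
lemma cnt_neutral (m : ℕ) (π : Equiv.Perm (Fin (m + 1))) :
    cnt (m + 2) (neutral m π) 0 = permIdes (m + 1) π + 1 := by
  have h1 : m + 1 ∉ permDES (m + 1) π⁻¹ := by simp [permDES]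
  rw [permIdes, permDes, ← card_insert_of_notMem h1, cnt]
  congr 1
  ext g
  simp only [mem_filter, mem_Ico, mem_insert]
  simp only [permDES, mem_filter, mem_Ico, neutral, invWord]
  constructor
  · rintro ⟨⟨-, h⟩, h0, h2⟩
    by_cases hg : g < m + 1
    · right
      refine ⟨⟨h0, hg⟩, hg, by omega, ?_⟩
      rw [dif_pos hg, dif_pos (by omega)] at h2
      rw [Fin.lt_def]; omega
    · left; omega
  · rintro (rfl | ⟨⟨h0, hg⟩, _, _, h2⟩)
    · simp
    · refine ⟨by omega, by omega, ?_⟩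
      rw [dif_pos hg, dif_pos (by omega)]
      rw [Fin.lt_def] at h2; omega

/-- `DES(π)` and `S` agree on `{1, …, m}`; elements of `S` outside that range do not matter. -/
def PermOK (S : Finset ℕ) (m : ℕ) (π : Equiv.Perm (Fin (m + 1))) : Prop :=
  ∀ i : Fin m, ((i : ℕ) + 1 ∈ S ↔ π i.succ < π i.castSucc)

lemma permOK_ins (S : Finset ℕ) {m : ℕ} (x : Fin (m + 2)) (π : Equiv.Perm (Fin (m + 1))) :
    PermOK S (m + 1) (ins x π) ↔
      PermOK S m π ∧ (m + 1 ∈ S ↔ (x : ℕ) < π (Fin.last m) + 1) := by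
  unfold PermOK
  rw [Fin.forall_fin_succ']
  refine and_congr (forall_congr' fun i => ?_) ?_
  · rw [Fin.succ_castSucc, ins_castSucc, ins_castSucc, Fin.succAbove_lt_succAbove_iff]
    simp
  · rw [Fin.succ_last, ins_last, ins_castSucc, Fin.lt_succAbove_iff_le_castSucc, Fin.le_def]
    simp

lemma permOK_iff (S : Finset ℕ) (m : ℕ) (hS : S ⊆ Icc 1 m) (π : Equiv.Perm (Fin (m + 1))) :
    PermOK S m π ↔ permDES (m + 1) π = S := by
  constructor
  · intro h
    ext i
    simp only [permDES, mem_filter, mem_Ico]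
    constructor
    · rintro ⟨⟨h1, h2⟩, _, _, h3⟩
      obtain ⟨i, rfl⟩ : ∃ k, i = k + 1 := ⟨i - 1, by omega⟩
      exact (h ⟨i, by omega⟩).2 h3
    · intro hi
      have := mem_Icc.1 (hS hi)
      obtain ⟨i, rfl⟩ : ∃ k, i = k + 1 := ⟨i - 1, by omega⟩
      exact ⟨by omega, by omega, by omega, (h ⟨i, by omega⟩).1 hi⟩
  · rintro rfl i
    simp only [permDES, mem_filter, mem_Ico]
    constructor
    · rintro ⟨-, _, _, h⟩; exact h
    · intro h; exact ⟨by omega, by omega, by omega, h⟩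

/-- The sum of `X ^ ides` over the permutations with descents prescribed by `S`, weighted by the
continuations along `s`. The sites after the position of the maximum of `π⁻¹` are those that create
no descent. -/
def permSum (S : Finset ℕ) (m : ℕ) (s : List Bool) : ℤ[X] :=
  ∑ π : Equiv.Perm (Fin (m + 1)), if PermOK S m π then
    X ^ permIdes (m + 1) π *
      Q s (cnt (m + 2) (neutral m π) 0) (cnt (m + 2) (fun y => ¬ neutral m π y) 0)
        (cnt (m + 2) (neutral m π) (π (Fin.last m) + 1))
        (cnt (m + 2) (fun y => ¬ neutral m π y) (π (Fin.last m) + 1))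
    else 0

lemma sum_step (S : Finset ℕ) (m q : ℕ) (hq : q ≤ m + 2) (f : ℕ → ℤ[X]) :
    (∑ x : Fin (m + 2), if (m + 1 ∈ S ↔ (x : ℕ) < q) then f x else 0)
      = if m + 1 ∈ S then ∑ x ∈ range q, f x else ∑ x ∈ Ico q (m + 2), f x := by
  rw [Fin.sum_univ_eq_sum_range (fun x => if (m + 1 ∈ S ↔ x < q) then f x else 0) (m + 2),
    ← sum_filter]
  split_ifs with h
  · refine sum_congr ?_ fun _ _ => rfl
    ext y; simp [h]; omega
  · refine sum_congr ?_ fun _ _ => rfl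
    ext y; simp [h]; omega

/-- Appending one value to a permutation performs one step of `Q`. -/
lemma permSum_succ (S : Finset ℕ) (m : ℕ) (s : List Bool) :
    permSum S (m + 1) s = permSum S m (decide (m + 1 ∈ S) :: s) := by
  unfold permSum
  rw [← (ins_bijective m).sum_comp, Fintype.sum_prod_type]
  refine sum_congr rfl fun π _ => ?_
  simp only [permOK_ins, ite_and]
  split_ifs with hπ
  · set a := cnt (m + 2) (neutral m π) 0 with ha
    set b := cnt (m + 2) (fun y => ¬ neutral m π y) 0 with hb
    set f : ℕ → ℤ[X] := fun x => stepTerm (Q s) a b (neutral m π x)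
      (cnt (m + 2) (neutral m π) (x + 1)) (cnt (m + 2) (fun y => ¬ neutral m π y) (x + 1)) with hf
    have key : ∀ x : Fin (m + 2), X ^ permIdes (m + 1 + 1) (ins x π) *
        Q s (cnt (m + 1 + 2) (neutral (m + 1) (ins x π)) 0)
          (cnt (m + 1 + 2) (fun y => ¬ neutral (m + 1) (ins x π) y) 0)
          (cnt (m + 1 + 2) (neutral (m + 1) (ins x π)) (ins x π (Fin.last (m + 1)) + 1))
          (cnt (m + 1 + 2) (fun y => ¬ neutral (m + 1) (ins x π) y)
            (ins x π (Fin.last (m + 1)) + 1))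
        = X ^ permIdes (m + 1) π * f x := by
      intro x
      have h1 : cnt (m + 3) (neutral (m + 1) (ins x π)) 0 = permIdes (m + 1 + 1) (ins x π) + 1 :=
        cnt_neutral (m + 1) (ins x π)
      have h2 := cnt_neutral m π
      have h3 := cnt_ins x π
      rw [ins_last, cnt_ins_after, cnt_ins_after_not, cnt_ins, cnt_ins_not]
      simp only [hf, stepTerm]
      by_cases hx : neutral m π x
      · rw [if_pos hx] at h3
        rw [show permIdes (m + 1 + 1) (ins x π) = permIdes (m + 1) π by omega]
        simp [hx, ha, hb]
      · rw [if_neg hx] at h3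
        rw [show permIdes (m + 1 + 1) (ins x π) = permIdes (m + 1) π + 1 by omega]
        simp [hx, ha, hb, pow_succ, mul_assoc]
    simp only [key]
    have hmul : ∀ (x : Fin (m + 2)),
        (if (m + 1 ∈ S ↔ (x : ℕ) < π (Fin.last m) + 1) then X ^ permIdes (m + 1) π * f x else 0)
        = X ^ permIdes (m + 1) π *
          (if (m + 1 ∈ S ↔ (x : ℕ) < π (Fin.last m) + 1) then f x else 0) := by
      intro x; rw [mul_ite, mul_zero]
    rw [sum_congr rfl fun x _ => hmul x, ← mul_sum, sum_step _ _ _ (by omega)]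
    congr 1
    have hq : (π (Fin.last m) : ℕ) + 1 ≤ m + 2 := by omega
    have e1 := nd_eq_sum_Ico (Q_exch s) a b (neutral m π) (m + 2) _ hq
    have e2 := nd_eq_sum_Ico (Q_exch s) a b (neutral m π) (m + 2) 0 (by omega)
    have e3 := sum_range_add_sum_Ico f hq
    rw [range_eq_Ico, range_eq_Ico] at e3
    split_ifs with h
    · simp only [h, decide_true, Q]
      rw [e1, e2, ← e3, range_eq_Ico]; ring
    · simp only [h, decide_false, Q]
      rw [e1]
  · simp

/-! ### Inversion tables grown by appending an entry -/

/-- Append the entry `x + 1` to an inversion table. -/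
def snocTable {m : ℕ} (e : InvTable (m + 1)) (x : Fin (m + 2)) : InvTable (m + 2) :=
  ⟨Fin.snoc (α := fun _ => Fin (m + 3)) (fun i => (e.1 i).castSucc) x.succ, by
    intro i
    induction i using Fin.lastCases with
    | last => simp; omega
    | cast i => simpa using e.2 i⟩

@[simp] lemma snocTable_last {m : ℕ} (e : InvTable (m + 1)) (x : Fin (m + 2)) :
    ((snocTable e x).1 (Fin.last (m + 1)) : ℕ) = x + 1 := by
  simp [snocTable]

@[simp] lemma snocTable_castSucc {m : ℕ} (e : InvTable (m + 1)) (x : Fin (m + 2))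
    (i : Fin (m + 1)) : ((snocTable e x).1 i.castSucc : ℕ) = e.1 i := by
  simp [snocTable]

lemma snocTable_bijective (m : ℕ) : Function.Bijective
    (fun z : InvTable (m + 1) × Fin (m + 2) => snocTable z.1 z.2) := by
  constructor
  · rintro ⟨e, x⟩ ⟨d, y⟩ h
    have h' : snocTable e x = snocTable d y := h
    ext i
    · have := snocTable_castSucc e x i
      rw [h', snocTable_castSucc] at this
      exact this.symm
    · have := snocTable_last e x
      rw [h', snocTable_last] at this
      simpa using this.symm
  · intro e
    have hl := e.2 (Fin.last (m + 1))
    rw [Fin.val_last] at hl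
    have hi : ∀ i : Fin (m + 1), 1 ≤ (e.1 i.castSucc : ℕ) ∧ (e.1 i.castSucc : ℕ) ≤ i + 1 :=
      fun i => by simpa using e.2 i.castSucc
    refine ⟨⟨⟨fun i => ⟨e.1 i.castSucc, by have := hi i; omega⟩, hi⟩,
      ⟨e.1 (Fin.last (m + 1)) - 1, by omega⟩⟩, ?_⟩
    ext i
    induction i using Fin.lastCases with
    | last => simp; omega
    | cast i => simp

/-- Site `y` is neutral for an inversion table if the value `y + 1` already occurs in it. -/
def used (m : ℕ) (e : InvTable (m + 1)) (y : ℕ) : Prop := ∃ i, (e.1 i : ℕ) = y + 1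

lemma used_snoc {m : ℕ} (e : InvTable (m + 1)) (x : Fin (m + 2)) (y : ℕ) :
    used (m + 1) (snocTable e x) y ↔ used m e y ∨ y = x := by
  unfold used
  rw [Fin.exists_fin_succ']
  simp only [snocTable_castSucc, snocTable_last]
  refine or_congr Iff.rfl ?_
  omega

lemma not_used {m : ℕ} (e : InvTable (m + 1)) (y : ℕ) (hy : m + 1 ≤ y) : ¬ used m e y := by
  rintro ⟨i, hi⟩
  have := e.2 i
  omega

lemma count_or_eq (t : ℕ → Prop) (x n : ℕ) :
    Nat.count (fun y => t y ∨ y = x) n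
      = Nat.count t n + if x < n ∧ ¬ t x then 1 else 0 := by
  induction n with
  | zero => simp
  | succ n ih =>
    rw [Nat.count_succ, Nat.count_succ, ih]
    by_cases h1 : n = x
    · subst h1; by_cases h : t n <;> simp [h]
    · have : x < n + 1 ↔ x < n := by omega
      simp only [this, h1, or_false]; omega

lemma count_not (t : ℕ → Prop) (n : ℕ) :
    Nat.count t n + Nat.count (fun y => ¬ t y) n = n := by
  induction n with
  | zero => simp
  | succ n ih =>
    rw [Nat.count_succ, Nat.count_succ]
    by_cases h : t n <;> simp [h] <;> omega

lemma count_snoc {m : ℕ} (e : InvTable (m + 1)) (x : Fin (m + 2)) (n : ℕ) :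
    Nat.count (used (m + 1) (snocTable e x)) n
      = Nat.count (used m e) n + if (x : ℕ) < n ∧ ¬ used m e x then 1 else 0 := by
  rw [← count_or_eq]
  congr 1
  ext y; exact used_snoc e x y

/-- The value `1` always occurs, and `row` leaves it out. -/
lemma count_used (m : ℕ) (e : InvTable (m + 1)) :
    Nat.count (used m e) (m + 2) = invRow (m + 1) e + 1 := by
  have h0 : (e.1 0 : ℕ) = 1 := by
    have := e.2 0
    simp at this
    omega
  have h1 : 1 ∉ invROW (m + 1) e := by simp [invROW]
  rw [invRow, ← card_insert_of_notMem h1, Nat.count_eq_card_filter_range]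
  refine card_bij (fun y _ => y + 1) ?_ ?_ ?_
  · intro y hy
    obtain ⟨i, hi⟩ := (mem_filter.1 hy).2
    simp only [invROW, mem_insert, mem_sdiff, mem_image, mem_univ, true_and, mem_singleton]
    exact (eq_or_ne (y + 1) 1).imp_right fun h => ⟨⟨i, hi⟩, h⟩
  · intro y _ z _ hyz; omega
  · intro y hy
    simp only [invROW, mem_insert, mem_sdiff, mem_image, mem_univ, true_and, mem_singleton] at hy
    have hy' : ∃ i, (e.1 i : ℕ) = y := by
      rcases hy with rfl | hy
      · exact ⟨0, h0⟩
      · exact hy.1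
    obtain ⟨i, hi⟩ := hy'
    have := e.2 i
    exact ⟨y - 1, mem_filter.2 ⟨mem_range.2 (by omega), i, by omega⟩, by omega⟩

/-- `ASC(e)` and `S` agree on `{1, …, m}`. -/
def TableOK (S : Finset ℕ) (m : ℕ) (e : InvTable (m + 1)) : Prop :=
  ∀ i : Fin m, ((i : ℕ) + 1 ∈ S ↔ (e.1 i.castSucc : ℕ) < e.1 i.succ)

lemma tableOK_snoc (S : Finset ℕ) {m : ℕ} (e : InvTable (m + 1)) (x : Fin (m + 2)) :
    TableOK S (m + 1) (snocTable e x) ↔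
      TableOK S m e ∧ (m + 1 ∈ S ↔ ¬ (x : ℕ) < e.1 (Fin.last m)) := by
  unfold TableOK
  rw [Fin.forall_fin_succ']
  refine and_congr (forall_congr' fun i => ?_) ?_
  · rw [Fin.succ_castSucc, snocTable_castSucc, snocTable_castSucc]
    simp
  · rw [Fin.succ_last, snocTable_last, snocTable_castSucc]
    simp

lemma tableOK_iff (S : Finset ℕ) (m : ℕ) (hS : S ⊆ Icc 1 m) (e : InvTable (m + 1)) :
    TableOK S m e ↔ invASC (m + 1) e = S := by
  constructor
  · intro h
    ext i
    simp only [invASC, mem_filter, mem_Ico]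
    constructor
    · rintro ⟨⟨h1, h2⟩, _, _, h3⟩
      obtain ⟨i, rfl⟩ : ∃ k, i = k + 1 := ⟨i - 1, by omega⟩
      exact (h ⟨i, by omega⟩).2 h3
    · intro hi
      have := mem_Icc.1 (hS hi)
      obtain ⟨i, rfl⟩ : ∃ k, i = k + 1 := ⟨i - 1, by omega⟩
      exact ⟨by omega, by omega, by omega, (h ⟨i, by omega⟩).1 hi⟩
  · rintro rfl i
    simp only [invASC, mem_filter, mem_Ico]
    constructor
    · rintro ⟨-, _, _, h⟩; exact h
    · intro h; exact ⟨by omega, by omega, by omega, h⟩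

/-- The analogue of `permSum` for inversion tables. The values up to the last entry are those that
create no ascent. -/
def tableSum (S : Finset ℕ) (m : ℕ) (s : List Bool) : ℤ[X] :=
  ∑ e : InvTable (m + 1), if TableOK S m e then
    X ^ invRow (m + 1) e *
      Q s (Nat.count (used m e) (m + 2)) (Nat.count (fun y => ¬ used m e y) (m + 2))
        (Nat.count (used m e) (e.1 (Fin.last m)))
        (Nat.count (fun y => ¬ used m e y) (e.1 (Fin.last m)))
    else 0

lemma sum_step' (S : Finset ℕ) (m q : ℕ) (hq : q ≤ m + 2) (f : ℕ → ℤ[X]) :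
    (∑ x : Fin (m + 2), if (m + 1 ∈ S ↔ ¬ (x : ℕ) < q) then f x else 0)
      = if m + 1 ∈ S then ∑ x ∈ Ico q (m + 2), f x else ∑ x ∈ range q, f x := by
  rw [Fin.sum_univ_eq_sum_range (fun x => if (m + 1 ∈ S ↔ ¬ x < q) then f x else 0) (m + 2),
    ← sum_filter]
  split_ifs with h
  · refine sum_congr ?_ fun _ _ => rfl
    ext y; simp [h]; omega
  · refine sum_congr ?_ fun _ _ => rfl
    ext y; simp [h]; omega

/-- Appending one entry to an inversion table performs one step of `Q`. -/
lemma tableSum_succ (S : Finset ℕ) (m : ℕ) (s : List Bool) :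
    tableSum S (m + 1) s = tableSum S m (decide (m + 1 ∈ S) :: s) := by
  unfold tableSum
  rw [← (snocTable_bijective m).sum_comp, Fintype.sum_prod_type]
  refine sum_congr rfl fun e _ => ?_
  simp only [tableOK_snoc, ite_and]
  split_ifs with he
  · set a := Nat.count (used m e) (m + 2) with ha
    set b := Nat.count (fun y => ¬ used m e y) (m + 2) with hb
    set f : ℕ → ℤ[X] := fun x => stepTerm (Q s) a b (used m e x)
      (Nat.count (used m e) x) (Nat.count (fun y => ¬ used m e y) x) with hf
    have key : ∀ x : Fin (m + 2), X ^ invRow (m + 1 + 1) (snocTable e x) *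
        Q s (Nat.count (used (m + 1) (snocTable e x)) (m + 1 + 2))
          (Nat.count (fun y => ¬ used (m + 1) (snocTable e x) y) (m + 1 + 2))
          (Nat.count (used (m + 1) (snocTable e x)) ((snocTable e x).1 (Fin.last (m + 1))))
          (Nat.count (fun y => ¬ used (m + 1) (snocTable e x) y)
            ((snocTable e x).1 (Fin.last (m + 1))))
        = X ^ invRow (m + 1) e * f x := by
      intro x
      have h1 := count_used (m + 1) (snocTable e x)
      have h2 := count_used m e
      have h3 := count_snoc e x (m + 1 + 2)
      have h4 := count_snoc e x (x + 1)
      have h5 := count_not (used (m + 1) (snocTable e x)) (m + 1 + 2)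
      have h6 := count_not (used (m + 1) (snocTable e x)) (x + 1)
      have h7 := count_not (used m e) (m + 2)
      have h8 := count_not (used m e) x
      have h9 : Nat.count (used m e) (m + 1 + 2) = Nat.count (used m e) (m + 2) := by
        rw [Nat.count_succ, if_neg (not_used e _ (by omega))]; rfl
      have h10 := Nat.count_succ (used m e) (x : ℕ)
      have hx3 : (x : ℕ) < m + 1 + 2 := by omega
      rw [snocTable_last]
      simp only [hf, stepTerm]
      by_cases hx : used m e x
      · simp only [hx, not_true, and_false, if_true, if_false] at h3 h4 h10 ⊢
        congr 2 <;> omega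
      · simp only [hx, not_false_eq_true, and_true, hx3, Nat.lt_succ_self, if_true,
          if_false] at h3 h4 h10 ⊢
        rw [← mul_assoc, ← pow_succ]
        congr 2 <;> omega
    simp only [key]
    have hmul : ∀ (x : Fin (m + 2)),
        (if (m + 1 ∈ S ↔ ¬ (x : ℕ) < e.1 (Fin.last m)) then X ^ invRow (m + 1) e * f x else 0)
        = X ^ invRow (m + 1) e *
          (if (m + 1 ∈ S ↔ ¬ (x : ℕ) < e.1 (Fin.last m)) then f x else 0) := by
      intro x; rw [mul_ite, mul_zero]
    rw [sum_congr rfl fun x _ => hmul x, ← mul_sum, sum_step' _ _ _ (by omega)]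
    congr 1
    have hq : (e.1 (Fin.last m) : ℕ) ≤ m + 2 := by omega
    have e1 := nd_eq_sum_range (Q_exch s) a b (used m e) (e.1 (Fin.last m))
    have e2 := nd_eq_sum_range (Q_exch s) a b (used m e) (m + 2)
    have e3 := sum_range_add_sum_Ico f hq
    split_ifs with h
    · simp only [h, decide_true, Q]
      rw [e1, e2, ← e3]; ring
    · simp only [h, decide_false, Q]
      rw [e1]
  · simp

/-! ### Comparison of the two weighted counts -/

lemma permSum_zero (S : Finset ℕ) (s : List Bool) : permSum S 0 s = Q s 1 1 1 0 := by
  have h0 : ¬ neutral 0 1 0 := by simp [neutral]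
  have h1 : neutral 0 1 1 := by simp [neutral, invWord]
  have hd : permIdes 1 1 = 0 := by simp [permIdes, permDes, permDES]
  have hOK : PermOK S 0 1 := fun i => i.elim0
  have : Subsingleton (Equiv.Perm (Fin (0 + 1))) :=
    inferInstanceAs (Subsingleton (Equiv.Perm (Fin 1)))
  unfold permSum
  rw [Fintype.sum_subsingleton _ 1, if_pos hOK]
  have c2 : ∀ t, cnt (0 + 2) t 2 = 0 := fun t => by simp [cnt]
  have c1 : ∀ t, cnt (0 + 2) t 1 = if t 1 then 1 else 0 := fun t => by
    rw [cnt_of_lt t (by omega), c2, zero_add]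
  have c0 : ∀ t, cnt (0 + 2) t 0 = (if t 1 then 1 else 0) + if t 0 then 1 else 0 := fun t => by
    rw [cnt_of_lt t (by omega), c1]
  simp [c0, c1, h0, h1, hd]

lemma tableSum_zero (S : Finset ℕ) (s : List Bool) : tableSum S 0 s = Q s 1 1 1 0 := by
  have hval : ∀ (e : InvTable (0 + 1)) i, (e.1 i : ℕ) = 1 := fun e i => by
    have := e.2 i; omega
  have : Unique (InvTable (0 + 1)) :=
    { default := ⟨fun _ => 1, by simp⟩
      uniq := fun e => by ext i; rw [hval, hval] }
  unfold tableSum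
  rw [Fintype.sum_unique]
  set e : InvTable (0 + 1) := default
  have hOK : TableOK S 0 e := fun i => i.elim0
  have h0 : used 0 e 0 := ⟨0, hval e 0⟩
  have h1 : ¬ used 0 e 1 := not_used e 1 le_rfl
  have hr : invRow (0 + 1) e = 0 := by
    have := count_used 0 e
    simpa [Nat.count_succ, h0, h1] using this
  rw [if_pos hOK, hval, hr]
  simp [Nat.count_succ, h0, h1]

lemma permSum_eq_tableSum (S : Finset ℕ) (m : ℕ) (s : List Bool) :
    permSum S m s = tableSum S m s := by
  induction m generalizing s with
  | zero => rw [permSum_zero, tableSum_zero]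
  | succ m ih => rw [permSum_succ, tableSum_succ, ih]

lemma coeff_sum_ite {ι : Type*} [Fintype ι] (p : ι → Prop) [DecidablePred p] (r : ι → ℕ) (k : ℕ) :
    (∑ i : ι, if p i then (X : ℤ[X]) ^ r i * 1 else 0).coeff k
      = (#{i : ι | p i ∧ r i = k} : ℕ) := by
  rw [finsetSum_coeff, card_filter, Nat.cast_sum]
  refine sum_congr rfl fun i _ => ?_
  by_cases h1 : p i
  · simp [h1, coeff_X_pow, eq_comm]
  · simp [h1]

end

end DoubleEulerian

/-- For every positive integer `n`, every `S ⊆ {1,...,n-1}` and every `k`, the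
number of permutations of `{1,...,n}` with `DES(π) = S` and `ides(π) = k`
equals the number of inversion tables of length `n` with `ASC(e) = S` and
`row(e) = k`. -/
theorem double_eulerian_set_valued (n : ℕ) (hn : 0 < n) (S : Finset ℕ)
    (hS : S ⊆ Finset.Icc 1 (n - 1)) (k : ℕ) :
    (Finset.univ.filter
      (fun π : Equiv.Perm (Fin n) => permDES n π = S ∧ permIdes n π = k)).card =
    (Finset.univ.filter
      (fun e : InvTable n => invASC n e = S ∧ invRow n e = k)).card := by
  classical
  obtain ⟨m, rfl⟩ : ∃ m, n = m + 1 := ⟨n - 1, by omega⟩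
  rw [Nat.add_sub_cancel] at hS
  have h := congrArg (fun q => q.coeff k) (DoubleEulerian.permSum_eq_tableSum S m [])
  simp only [DoubleEulerian.permSum, DoubleEulerian.tableSum, DoubleEulerian.Q,
    DoubleEulerian.permOK_iff S m hS,
    DoubleEulerian.tableOK_iff S m hS] at h
  rw [DoubleEulerian.coeff_sum_ite, DoubleEulerian.coeff_sum_ite, Nat.cast_inj] at h
  convert h
end

section
/- For every positive integer n, every subset S ⊆ {1,...,n-1}, and every nonnegative integer k, the number of permutations π of {1,...,n} with S ⊆ DES(π) and ides(π) = k equals the number of inversion tables e of length n with S ⊆ ASC(e) and row(e) = k. Equivalently, ∑_{π ∈ S_n, S ⊆ DES(π)} s^{ides(π)} = ∑_{e ∈ I_n, S ⊆ ASC(e)} s^{row(e)}. -/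
section

open Finset

/-! ### Binomial identities -/

/-- Vandermonde's identity, with one factor expanded over subsets. -/
lemma sum_powerset_choose (r N : ℕ) (W : Finset ℕ) :
    ∑ Z ∈ W.powerset, (if Z.card ≤ N then r.choose (N - Z.card) else 0) =
      (W.card + r).choose N := by
  rw [Finset.sum_powerset_apply_card (fun z => if z ≤ N then r.choose (N - z) else 0),
    Nat.add_choose_eq,
    Finset.Nat.sum_antidiagonal_eq_sum_range_succ (fun i j => W.card.choose i * r.choose j)]
  simp only [smul_eq_mul]
  have key : ∀ z, W.card.choose z * (if z ≤ N then r.choose (N - z) else 0) =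
      if z ≤ N then W.card.choose z * r.choose (N - z) else 0 := by
    intro z; split_ifs <;> simp
  simp only [key]
  rw [← sum_filter]
  apply Finset.sum_subset
  · intro x; simp
  · intro x hx hx'
    simp only [mem_filter, mem_range] at hx hx'
    rw [Nat.choose_eq_zero_of_lt (by omega), zero_mul]

/-- Appending a block of `c` entries to a sequence with set of values `U` multiplies the weight
`C(N - c + r - |U|, N - c)` by `C(r, c)`. Expanding `C(r + |V \ X|, N)`, where `V = range N \ U`, over
the subsets `Z ⊆ V \ X` and summing over `X ⊆ range N \ Z` first reduces this to Vandermonde. -/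
lemma sum_powersetCard_choose (r N c : ℕ) (U : Finset ℕ) (hU : U ⊆ range N) (hc : c ≤ N) :
    ∑ X ∈ powersetCard c (range N), (N + r - (U ∪ X).card).choose N =
      r.choose c * ((N - c) + r - U.card).choose (N - c) := by
  -- For `r < c` both sides vanish; otherwise `N - c + r - |U| = |V| + (r - c)` without truncation.
  by_cases hcr : r < c
  · rw [Nat.choose_eq_zero_of_lt hcr, zero_mul]
    apply Finset.sum_eq_zero
    intro X hX
    rw [mem_powersetCard] at hX
    have := card_le_card (subset_union_right (s₁ := U) (s₂ := X))
    apply Nat.choose_eq_zero_of_lt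
    have := card_le_card (union_subset hU hX.1)
    rw [card_range] at this
    omega
  push Not at hcr
  have hUc := card_le_card hU
  rw [card_range] at hUc
  set V := range N \ U with hV
  have hVc : V.card = N - U.card := by rw [hV, card_sdiff_of_subset hU, card_range]
  have h1 : ∀ X ∈ powersetCard c (range N), (N + r - (U ∪ X).card).choose N =
      ∑ Z ∈ (V \ X).powerset, r.choose (N - Z.card) := by
    intro X hX
    rw [mem_powersetCard] at hX
    have hu := union_subset hU hX.1
    have hle := card_le_card hu
    have e : (V \ X).card = N - (U ∪ X).card := by
      rw [hV, sdiff_sdiff_left, sup_eq_union, card_sdiff_of_subset hu, card_range]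
    rw [card_range] at hle
    have h3 : ∀ Z ∈ (V \ X).powerset, r.choose (N - Z.card) =
        if Z.card ≤ N then r.choose (N - Z.card) else 0 := by
      intro Z hZ
      have := card_le_card (mem_powerset.1 hZ)
      rw [if_pos (by omega)]
    rw [sum_congr rfl h3, sum_powerset_choose, e]
    congr 1; omega
  rw [sum_congr rfl h1, Finset.sum_comm' (t' := V.powerset)
    (s' := fun Z => powersetCard c (range N \ Z))]
  · have h2 : ∀ Z ∈ V.powerset, ∑ X ∈ powersetCard c (range N \ Z), r.choose (N - Z.card) =
        r.choose c * (if Z.card ≤ N - c then (r - c).choose (N - c - Z.card) else 0) := by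
      intro Z hZ
      rw [mem_powerset] at hZ
      have hZN : Z ⊆ range N := hZ.trans sdiff_subset
      have hZc := card_le_card hZN
      rw [card_range] at hZc
      rw [sum_const, card_powersetCard, card_sdiff_of_subset hZN, card_range, smul_eq_mul, mul_comm]
      split_ifs with h
      · rw [Nat.choose_mul (by omega : c ≤ N - Z.card)]
        congr 2; omega
      · rw [Nat.choose_eq_zero_of_lt (by omega : N - Z.card < c)]
        simp
    rw [sum_congr rfl h2, ← mul_sum, sum_powerset_choose, hVc]
    congr 2; omega
  · intro X Z
    simp only [mem_powersetCard, mem_powerset, hV]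
    constructor
    · rintro ⟨⟨h1, h2⟩, h3⟩
      refine ⟨⟨fun x hx => ?_, h2⟩, fun x hx => ?_⟩
      · simp only [mem_sdiff]
        refine ⟨h1 hx, fun hz => ?_⟩
        have := h3 hz; simp_all
      · exact (mem_sdiff.1 (h3 hx)).1
    · rintro ⟨⟨h1, h2⟩, h3⟩
      refine ⟨⟨fun x hx => (mem_sdiff.1 (h1 hx)).1, h2⟩, fun x hx => ?_⟩
      refine mem_sdiff.2 ⟨h3 hx, fun hX => (mem_sdiff.1 (h1 hX)).2 hx⟩

/-! ### Sequences with prescribed ascents -/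

open Classical in
/-- Sequences `f 0, …, f (n-1)` of naturals with `f i < b i`, having an ascent at each position
of `S` (positions are 1-indexed: `i + 1 ∈ S` compares `f i` and `f (i + 1)`). -/
noncomputable def ascFun (n : ℕ) (S : Finset ℕ) (b : ℕ → ℕ) : Finset (Fin n → ℕ) :=
  (Fintype.piFinset fun i : Fin n => range (b i)).filter fun f =>
    ∀ i (h : i + 1 < n), i + 1 ∈ S → f ⟨i, by omega⟩ < f ⟨i + 1, h⟩

lemma mem_ascFun {n : ℕ} {S : Finset ℕ} {b : ℕ → ℕ} {f : Fin n → ℕ} :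
    f ∈ ascFun n S b ↔ (∀ i : Fin n, f i < b i) ∧
      ∀ i (h : i + 1 < n), i + 1 ∈ S → f ⟨i, by omega⟩ < f ⟨i + 1, h⟩ := by
  simp [ascFun, Fintype.mem_piFinset]

lemma strictMono_of_lt_next {n : ℕ} {f : Fin n → ℕ}
    (h : ∀ i (h : i + 1 < n), f ⟨i, by omega⟩ < f ⟨i + 1, h⟩) : StrictMono f := by
  cases n with
  | zero => intro i; exact i.elim0
  | succ n =>
    rw [Fin.strictMono_iff_lt_succ]
    intro i
    exact h i (by omega)

/-- If the bounds `b` grow by at most one per step, a strictly increasing block meets all of them as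
soon as its last entry does. -/
lemma lt_of_strictMono_of_last {m c : ℕ} {b : ℕ → ℕ} (hb : ∀ i, b (i + 1) ≤ b i + 1)
    {f : Fin c → ℕ} (hf : StrictMono f) (hB : ∀ h : 0 < c, f ⟨c - 1, by omega⟩ < b (m + c - 1))
    (i : Fin c) : f i < b (m + i) := by
  have key : ∀ k (hk : k < c), f ⟨c - 1 - k, by omega⟩ < b (m + (c - 1 - k)) := by
    intro k
    induction k with
    | zero =>
      intro hk
      have := hB hk
      rw [show m + (c - 1 - 0) = m + c - 1 by omega]
      exact this
    | succ k ih =>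
      intro hk
      have h1 := ih (by omega)
      have h2 : f ⟨c - 1 - (k + 1), by omega⟩ < f ⟨c - 1 - k, by omega⟩ :=
        hf (Fin.mk_lt_mk.2 (by omega))
      have h3 := hb (m + (c - 1 - (k + 1)))
      rw [show m + (c - 1 - (k + 1)) + 1 = m + (c - 1 - k) by omega] at h3
      omega
  have := key (c - 1 - i) (by omega)
  have e : c - 1 - (c - 1 - (i : ℕ)) = i := by omega
  simpa only [e] using this

/-- If `m ∉ S` (or `m = 0`) and `m + 1, …, m + c - 1 ∈ S`, the last `c` entries of a sequence with
ascents on `S` form an arbitrary `c`-subset of `{0, …, b (m + c - 1) - 1}`, written in increasing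
order and independent of the first `m` entries. -/
lemma sum_ascFun_block (m c : ℕ) (hc : 0 < c) (S : Finset ℕ) (hm : 0 < m → m ∉ S)
    (hS : ∀ j, m < j → j < m + c → j ∈ S) (b : ℕ → ℕ) (hb : ∀ i, b (i + 1) ≤ b i + 1)
    (G : Finset ℕ → ℕ) :
    ∑ f ∈ ascFun (m + c) S b, G (univ.image f) =
      ∑ f ∈ ascFun m S b, ∑ X ∈ powersetCard c (range (b (m + c - 1))), G (univ.image f ∪ X) := by
  have mono : ∀ f ∈ ascFun (m + c) S b, StrictMono (fun i : Fin c => f (Fin.natAdd m i)) := by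
    intro f hf
    rw [mem_ascFun] at hf
    apply strictMono_of_lt_next
    intro i h
    exact hf.2 (m + i) (by omega) (hS _ (by omega) (by omega))
  rw [← Finset.sum_product']
  refine Finset.sum_bij'
    (fun f _ => (fun i => f (Fin.castAdd c i), univ.image fun i => f (Fin.natAdd m i)))
    (fun p hp => Fin.append p.1
      (p.2.orderEmbOfFin (mem_powersetCard.1 (mem_product.1 hp).2).2)) ?_ ?_ ?_ ?_ ?_
  · intro f hf
    have hmono := mono f hf
    rw [mem_ascFun] at hf
    rw [mem_product, mem_ascFun, mem_powersetCard]
    refine ⟨⟨fun i => hf.1 _, fun i h hi => hf.2 i (by omega) hi⟩, ?_, ?_⟩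
    · intro x hx
      obtain ⟨i, -, rfl⟩ := mem_image.1 hx
      rw [mem_range]
      refine lt_of_le_of_lt ?_ (hf.1 ⟨m + c - 1, by omega⟩)
      have : i ≤ ⟨c - 1, by omega⟩ := Fin.le_def.2 (by dsimp only; omega)
      refine (hmono.monotone this).trans (le_of_eq ?_)
      congr 1
      ext; simp; omega
    · rw [card_image_of_injective _ hmono.injective]; simp
  · intro p hp
    rw [mem_product, mem_ascFun, mem_powersetCard] at hp
    obtain ⟨⟨h1, h2⟩, h3, h4⟩ := hp
    rw [mem_ascFun]
    constructor
    · intro i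
      refine Fin.addCases (fun i => ?_) (fun i => ?_) i
      · rw [Fin.append_left]; exact h1 i
      · rw [Fin.append_right]
        refine lt_of_strictMono_of_last hb (p.2.orderEmbOfFin h4).strictMono (fun h => ?_) i
        exact mem_range.1 (h3 (Finset.orderEmbOfFin_mem _ _ _))
    · intro i h hi
      have hne : i + 1 ≠ m := fun he => hm (by omega) (he ▸ hi)
      by_cases him : i + 1 < m
      · have := h2 i him hi
        have e1 : (⟨i, by omega⟩ : Fin (m + c)) = Fin.castAdd c ⟨i, by omega⟩ := rfl
        have e2 : (⟨i + 1, h⟩ : Fin (m + c)) = Fin.castAdd c ⟨i + 1, him⟩ := rfl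
        rw [e1, e2, Fin.append_left, Fin.append_left]
        exact this
      · have e1 : (⟨i, by omega⟩ : Fin (m + c)) = Fin.natAdd m ⟨i - m, by omega⟩ := by
          ext; simp; omega
        have e2 : (⟨i + 1, h⟩ : Fin (m + c)) = Fin.natAdd m ⟨i + 1 - m, by omega⟩ := by
          ext; simp; omega
        rw [e1, e2, Fin.append_right, Fin.append_right]
        exact (p.2.orderEmbOfFin h4).strictMono (Fin.mk_lt_mk.2 (by omega))
  · intro f hf
    funext i
    refine Fin.addCases (fun i => ?_) (fun i => ?_) i
    · simp only [Fin.append_left]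
    · simp only [Fin.append_right]
      have := Finset.orderEmbOfFin_unique (s := univ.image fun i => f (Fin.natAdd m i)) (k := c)
        (by rw [card_image_of_injective _ (mono f hf).injective]; simp)
        (f := fun i => f (Fin.natAdd m i)) (fun x => mem_image_of_mem _ (mem_univ _)) (mono f hf)
      exact (congrFun this i).symm
  · intro p hp
    ext1
    · simp
    · simp
  · intro f hf
    congr 1
    ext x
    simp only [mem_image, mem_univ, true_and, mem_union]
    constructor
    · rintro ⟨i, rfl⟩
      refine Fin.addCases (fun i => ?_) (fun i => ?_) i
      · exact Or.inl ⟨i, rfl⟩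
      · exact Or.inr ⟨i, rfl⟩
    · rintro (⟨i, rfl⟩ | ⟨i, rfl⟩)
      · exact ⟨_, rfl⟩
      · exact ⟨_, rfl⟩

lemma exists_last_block (n : ℕ) (hn : 0 < n) (S : Finset ℕ) :
    ∃ m c, m + c = n ∧ 0 < c ∧ (0 < m → m ∉ S) ∧ ∀ j, m < j → j < m + c → j ∈ S := by
  induction n with
  | zero => omega
  | succ n ih =>
    by_cases h : 0 < n ∧ n ∈ S
    · obtain ⟨m, c, h1, h2, h3, h4⟩ := ih h.1
      refine ⟨m, c + 1, by omega, by omega, h3, fun j hj hj' => ?_⟩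
      rcases eq_or_ne j n with rfl | hne
      · exact h.2
      · exact h4 j hj (by omega)
    · refine ⟨n, 1, rfl, one_pos, fun h0 h1 => h ⟨h0, h1⟩, fun j hj hj' => by omega⟩

/-- The generating identity for inversion tables (shifted to start at `0`): both sides are
multiplied by `C(r, c)` when a block of length `c` is appended. -/
lemma sum_invTable_choose (n : ℕ) (S : Finset ℕ) (r : ℕ) :
    ∑ f ∈ ascFun n S (· + 1), (n + r - (univ.image f).card).choose n =
      (ascFun n S fun _ => r).card := by
  induction n using Nat.strong_induction_on with
  | _ n ih =>
  rcases Nat.eq_zero_or_pos n with rfl | hn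
  · simp [ascFun]
  obtain ⟨m, c, rfl, hc, hm, hS⟩ := exists_last_block n hn S
  have hR := sum_ascFun_block m c hc S hm hS (fun _ => r) (fun _ => by omega) (fun _ => 1)
  simp only [sum_const, smul_eq_mul, mul_one, card_powersetCard, card_range] at hR
  rw [hR, ← ih m (by omega), sum_mul, sum_ascFun_block m c hc S hm hS (· + 1) (fun _ => le_rfl)
    (fun U => (m + c + r - U.card).choose (m + c))]
  refine sum_congr rfl fun f hf => ?_
  rw [mem_ascFun] at hf
  have := sum_powersetCard_choose r (m + c) c (univ.image f) ?_ (by omega)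
  · rw [show m + c - 1 + 1 = m + c by omega, this, Nat.add_sub_cancel, mul_comm]
  · intro x hx
    obtain ⟨i, -, rfl⟩ := mem_image.1 hx
    have := hf.1 i
    rw [mem_range]; omega

/-! ### Sorting permutations -/

lemma mem_permDES {n : ℕ} {π : Equiv.Perm (Fin n)} {i : ℕ} (h : i + 1 < n) :
    i + 1 ∈ permDES n π ↔ π ⟨i + 1, h⟩ < π ⟨i, by omega⟩ := by
  simp only [permDES, mem_filter, mem_Ico]
  constructor
  · rintro ⟨-, h1, h2, h3⟩; exact h3
  · intro h'; exact ⟨⟨by omega, h⟩, h, by omega, h'⟩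

/-- The stable sort of `f` into weakly decreasing order; `toDual` reverses the order on values. -/
lemma sort_toDual_eq_iff {n : ℕ} (f : Fin n → ℕ) (σ : Equiv.Perm (Fin n)) :
    Tuple.sort (fun i => OrderDual.toDual (f i)) = σ ↔
      (∀ a b, a ≤ b → f (σ b) ≤ f (σ a)) ∧
        ∀ a b, a < b → f (σ a) = f (σ b) → σ a < σ b := by
  rw [eq_comm, Tuple.eq_sort_iff]
  rfl

/-- The condition of `sort_toDual_eq_iff` needs to be checked on neighbours only: equal values may
sit next to each other in the sorted order exactly at the non-descents of `σ`. -/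
lemma sort_toDual_eq_iff_succ {n : ℕ} (f : Fin n → ℕ) (σ : Equiv.Perm (Fin n)) :
    Tuple.sort (fun i => OrderDual.toDual (f i)) = σ ↔
      ∀ v (h : v + 1 < n), f (σ ⟨v + 1, h⟩) ≤ f (σ ⟨v, by omega⟩) ∧
        (v + 1 ∈ permDES n σ → f (σ ⟨v + 1, h⟩) < f (σ ⟨v, by omega⟩)) := by
  rw [sort_toDual_eq_iff]
  constructor
  · rintro ⟨h1, h2⟩ v h
    have hlt : (⟨v, by omega⟩ : Fin n) < ⟨v + 1, h⟩ := Fin.mk_lt_mk.2 (by omega)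
    refine ⟨h1 _ _ hlt.le, fun hd => lt_of_le_of_ne (h1 _ _ hlt.le) fun he => ?_⟩
    rw [mem_permDES h] at hd
    exact absurd (h2 _ _ hlt he.symm) hd.asymm
  · intro h
    have key : ∀ d v (hv : v + d < n), f (σ ⟨v + d, hv⟩) ≤ f (σ ⟨v, by omega⟩) ∧
        (f (σ ⟨v + d, hv⟩) = f (σ ⟨v, by omega⟩) → σ ⟨v, by omega⟩ ≤ σ ⟨v + d, hv⟩) := by
      intro d v
      induction d with
      | zero => intro hv; exact ⟨le_rfl, fun _ => le_rfl⟩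
      | succ d ih =>
        intro hv
        obtain ⟨i1, i2⟩ := ih (by omega)
        obtain ⟨j1, j2⟩ := h (v + d) hv
        refine ⟨j1.trans i1, fun he => ?_⟩
        have e1 := i2 (le_antisymm i1 (he ▸ j1))
        refine e1.trans (not_lt.1 fun hlt => ?_)
        have := j2 ((mem_permDES hv).2 hlt)
        exact absurd he (this.trans_le i1).ne
    constructor
    · intro a b hab
      have e : (b : ℕ) = a + (b - a) := by have := Fin.le_def.1 hab; omega
      have := (key (b - a) a (by omega)).1
      simpa only [← e] using this
    · intro a b hab he
      have e : (b : ℕ) = a + (b - a) := by have := Fin.lt_def.1 hab; omega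
      have := (key (b - a) a (by omega)).2
      simp only [← e] at this
      exact lt_of_le_of_ne (this he.symm) fun h' => hab.ne (σ.injective h')

/-- If `π` is the rank function of the stable decreasing sort of `f`, then the ascents of `f` are the
descents of `π`. -/
lemma lt_succ_iff_of_sort {n : ℕ} (f : Fin n → ℕ) (π : Equiv.Perm (Fin n))
    (hf : Tuple.sort (fun i => OrderDual.toDual (f i)) = π⁻¹) (i : ℕ) (h : i + 1 < n) :
    f ⟨i, by omega⟩ < f ⟨i + 1, h⟩ ↔ i + 1 ∈ permDES n π := by
  rw [mem_permDES h]
  rw [sort_toDual_eq_iff] at hf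
  obtain ⟨h1, h2⟩ := hf
  constructor
  · intro hlt
    by_contra hle
    have := h1 _ _ (not_lt.1 hle)
    simp only [Equiv.Perm.inv_def, Equiv.symm_apply_apply] at this
    omega
  · intro hlt
    have h3 := h1 _ _ hlt.le
    have h4 := h2 _ _ hlt
    simp only [Equiv.Perm.inv_def, Equiv.symm_apply_apply] at h3 h4
    refine lt_of_le_of_ne h3 fun he => ?_
    have := Fin.lt_def.1 (h4 he.symm)
    simp at this

/-- The number of positions in `{1, …, v}` outside `D`. -/
def nonDes (D : Finset ℕ) (v : ℕ) : ℕ := ((Icc 1 v).filter (· ∉ D)).card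

lemma nonDes_succ (D : Finset ℕ) (v : ℕ) :
    nonDes D (v + 1) = nonDes D v + if v + 1 ∈ D then 0 else 1 := by
  have : Icc 1 (v + 1) = insert (v + 1) (Icc 1 v) := by ext; simp; omega
  rw [nonDes, this, filter_insert, nonDes]
  by_cases h : v + 1 ∈ D <;> simp [h]

lemma nonDes_last {n : ℕ} (hn : 0 < n) (σ : Equiv.Perm (Fin n)) :
    nonDes (permDES n σ) (n - 1) + permDes n σ = n - 1 := by
  have h := card_filter_add_card_filter_not (s := Icc 1 (n - 1)) (· ∈ permDES n σ)
  have e : (Icc 1 (n - 1)).filter (· ∈ permDES n σ) = permDES n σ := by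
    ext x
    simp only [mem_filter, mem_Icc, and_iff_right_iff_imp]
    intro hx
    have := mem_Ico.1 (mem_filter.1 hx).1
    omega
  rw [e, Nat.card_Icc] at h
  rw [nonDes, permDes]
  omega

lemma card_ascFun_all (n N : ℕ) (hn : 0 < n) :
    (ascFun n (Icc 1 n) fun _ => N).card = N.choose n := by
  have h := sum_ascFun_block 0 n hn (Icc 1 n) (by simp) (by intro j; simp; omega) (fun _ => N)
    (fun _ => by omega) (fun _ => 1)
  rw [Nat.zero_add] at h
  simpa [ascFun] using h

/-- The functions `f < r` sorted by a given `σ` correspond to weakly increasing words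
`r - 1 - f (σ v)` that increase strictly at the descents of `σ`; adding `nonDes v` turns these into
strictly increasing words bounded by `n + r - 1 - des σ`. -/
lemma card_sort_fiber {n : ℕ} (hn : 0 < n) (σ : Equiv.Perm (Fin n)) (r : ℕ) :
    ((Fintype.piFinset fun _ : Fin n => range r).filter fun f =>
      Tuple.sort (fun i => OrderDual.toDual (f i)) = σ).card =
      (n + r - 1 - permDes n σ).choose n := by
  rw [← card_ascFun_all n _ hn]
  set s := nonDes (permDES n σ) with hs
  have hsucc : ∀ v, s (v + 1) = s v + if v + 1 ∈ permDES n σ then 0 else 1 := nonDes_succ _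
  have hlast : s (n - 1) + permDes n σ = n - 1 := nonDes_last hn σ
  have hle : ∀ v, s v ≤ v := by
    intro v
    induction v with
    | zero => simp [hs, nonDes]
    | succ v ih => rw [hsucc]; split_ifs <;> omega
  have hmono : ∀ v, v < n → s v ≤ s (n - 1) := fun v hv =>
    monotone_nat_of_le_succ (fun v => by rw [hsucc]; omega) (by omega : v ≤ n - 1)
  -- A strictly increasing `g` dominates `s`, and `g - s` is bounded by its last value.
  have hg : ∀ g ∈ ascFun n (Icc 1 n) (fun _ => n + r - 1 - permDes n σ), ∀ v : Fin n,
      s v ≤ g v ∧ g v - s v < r := by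
    intro g hg
    rw [mem_ascFun] at hg
    have h1 : ∀ v (hv : v < n), v ≤ g ⟨v, hv⟩ := by
      intro v
      induction v with
      | zero => simp
      | succ v ih =>
        intro hv
        have := ih (by omega)
        have := hg.2 v hv (by simp; omega)
        omega
    have h2 : ∀ k (hk : k < n), g ⟨n - 1 - k, by omega⟩ + s (n - 1) <
        n + r - 1 - permDes n σ + s (n - 1 - k) := by
      intro k
      induction k with
      | zero => intro hk; have := hg.1 ⟨n - 1, by omega⟩; simpa using this
      | succ k ih =>
        intro hk
        have i1 := ih (by omega)
        have i2 := hg.2 (n - 1 - (k + 1)) (by omega) (by simp; omega)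
        have i3 := hsucc (n - 1 - (k + 1))
        have e : n - 1 - (k + 1) + 1 = n - 1 - k := by omega
        simp only [e] at i2 i3
        split_ifs at i3 <;> omega
    intro v
    have h3 := h1 v v.2
    have h4 := h2 (n - 1 - v) (by omega)
    have e : n - 1 - (n - 1 - (v : ℕ)) = v := by omega
    simp only [e] at h4
    have h5 := hle v
    simp only [Fin.eta] at h3 h4
    omega
  refine Finset.card_bij' (fun f _ => fun v => r - 1 - f (σ v) + s v)
    (fun g _ => fun i => r - 1 - (g (σ.symm i) - s (σ.symm i))) ?_ ?_ ?_ ?_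
  · intro f hf
    rw [mem_filter, Fintype.mem_piFinset, sort_toDual_eq_iff_succ] at hf
    simp only [mem_range] at hf
    rw [mem_ascFun]
    constructor
    · intro v
      have := hf.1 (σ v)
      have := hmono v v.2
      omega
    · intro i h _
      obtain ⟨h1, h2⟩ := hf.2 i h
      have h3 := hsucc i
      have := hf.1 (σ ⟨i, by omega⟩)
      split_ifs at h3 with hd
      · have := h2 hd
        simp only; omega
      · simp only; omega
  · intro g hg'
    have hb := hg g hg'
    rw [mem_ascFun] at hg'
    rw [mem_filter, Fintype.mem_piFinset, sort_toDual_eq_iff_succ]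
    simp only [mem_range, Equiv.symm_apply_apply]
    constructor
    · intro i
      have := hb (σ.symm i)
      omega
    · intro v h
      have h1 := hg'.2 v h (by simp; omega)
      have h2 := hsucc v
      have h3 := hb ⟨v, by omega⟩
      have h4 := hb ⟨v + 1, h⟩
      simp only at h3 h4
      split_ifs at h2 with hd
      · exact ⟨by omega, fun _ => by omega⟩
      · exact ⟨by omega, fun h => absurd h hd⟩
  · intro f hf
    rw [mem_filter, Fintype.mem_piFinset] at hf
    funext i
    have := mem_range.1 (hf.1 i)
    simp only [Equiv.apply_symm_apply]
    omega
  · intro g hg'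
    funext v
    have := hg g hg' v
    simp only [Equiv.symm_apply_apply]
    omega

/-- The generating identity for permutations: classify the functions with ascents on `S` by the
inverse of the permutation sorting them. -/
lemma sum_perm_choose {n : ℕ} (hn : 0 < n) (S : Finset ℕ) (hS : S ⊆ Icc 1 (n - 1)) (r : ℕ) :
    ∑ π ∈ univ.filter (fun π : Equiv.Perm (Fin n) => S ⊆ permDES n π),
      (n + r - 1 - permIdes n π).choose n = (ascFun n S fun _ => r).card := by
  have hsub : ∀ (f : Fin n → ℕ) (π : Equiv.Perm (Fin n)),
      Tuple.sort (fun i => OrderDual.toDual (f i)) = π⁻¹ →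
      ((∀ i (h : i + 1 < n), i + 1 ∈ S → f ⟨i, by omega⟩ < f ⟨i + 1, h⟩) ↔ S ⊆ permDES n π) := by
    intro f π hf
    constructor
    · intro h x hx
      have hx' := mem_Icc.1 (hS hx)
      obtain ⟨i, rfl⟩ : ∃ i, x = i + 1 := ⟨x - 1, by omega⟩
      rw [← lt_succ_iff_of_sort f π hf i (by omega)]
      exact h i _ hx
    · intro h i hi hiS
      rw [lt_succ_iff_of_sort f π hf i hi]
      exact h hiS
  rw [Finset.card_eq_sum_card_fiberwise
    (f := fun f => (Tuple.sort fun i => OrderDual.toDual (f i))⁻¹)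
    (t := univ.filter (fun π : Equiv.Perm (Fin n) => S ⊆ permDES n π))]
  · refine sum_congr rfl fun π hπ => ?_
    rw [permIdes, ← card_sort_fiber hn π⁻¹ r]
    congr 1
    ext f
    rw [mem_filter, mem_filter, mem_ascFun, Fintype.mem_piFinset, inv_eq_iff_eq_inv]
    simp only [mem_range]
    constructor
    · rintro ⟨h1, h2⟩
      exact ⟨⟨h1, (hsub f π h2).2 (mem_filter.1 hπ).2⟩, h2⟩
    · rintro ⟨⟨h1, -⟩, h2⟩
      exact ⟨h1, h2⟩
  · intro f hf
    have hf' := mem_ascFun.1 (mem_coe.1 hf)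
    rw [mem_coe, mem_filter]
    exact ⟨mem_univ _, (hsub f _ (inv_inv _).symm).1 hf'.2⟩

/-! ### Comparison of the two distributions -/

/-- `sum_invTable_choose` in terms of `row`: the value `1` is always attained (by `e_1`), so
`row e` is the number of distinct values minus one. -/
lemma sum_invTable_row {n : ℕ} (hn : 0 < n) (S : Finset ℕ) (hS : S ⊆ Icc 1 (n - 1)) (r : ℕ) :
    ∑ e ∈ univ.filter (fun e : InvTable n => S ⊆ invASC n e),
      (n + r - 1 - invRow n e).choose n = (ascFun n S fun _ => r).card := by
  rw [← sum_invTable_choose]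
  refine Finset.sum_bij' (fun e _ => fun i => (e.1 i : ℕ) - 1)
    (fun f hf => ⟨fun i => ⟨f i + 1, by have := (mem_ascFun.1 hf).1 i; omega⟩,
      fun i => by have := (mem_ascFun.1 hf).1 i; simp only; omega⟩) ?_ ?_ ?_ ?_ ?_
  · intro e he
    rw [mem_ascFun]
    constructor
    · intro i; have := e.2 i; omega
    · intro i h hi
      have := (mem_filter.1 ((mem_filter.1 he).2 hi)).2
      obtain ⟨h1, h2, h3⟩ := this
      have h4 := (e.2 ⟨i, by omega⟩).1
      simp only [Nat.add_sub_cancel] at h3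
      omega
  · intro f hf
    rw [mem_filter]
    refine ⟨mem_univ _, fun x hx => ?_⟩
    have hx' := mem_Icc.1 (hS hx)
    obtain ⟨i, rfl⟩ : ∃ i, x = i + 1 := ⟨x - 1, by omega⟩
    rw [invASC, mem_filter, mem_Ico]
    refine ⟨by omega, by omega, by omega, ?_⟩
    have := (mem_ascFun.1 hf).2 i (by omega) hx
    simpa using this
  · intro e he
    ext i
    have := (e.2 i).1
    simp only; omega
  · intro f hf
    funext i
    simp
  · intro e he
    have h1 : (univ.image fun i : Fin n => (e.1 i : ℕ)) =
        (univ.image fun i : Fin n => (e.1 i : ℕ) - 1).image (· + 1) := by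
      rw [image_image]
      refine image_congr fun i _ => ?_
      have := (e.2 i).1
      simp only [Function.comp]; omega
    have h2 : 1 ∈ univ.image fun i : Fin n => (e.1 i : ℕ) := by
      rw [mem_image]
      refine ⟨⟨0, hn⟩, mem_univ _, ?_⟩
      have := e.2 ⟨0, hn⟩
      simp only at this
      omega
    have h3 := card_pos.2 ⟨_, h2⟩
    have h4 : (univ.image fun i : Fin n => (e.1 i : ℕ)).card =
        (univ.image fun i : Fin n => (e.1 i : ℕ) - 1).card := by
      rw [h1, card_image_of_injective _ (add_left_injective 1)]
    rw [invRow, invROW, card_sdiff_of_subset (singleton_subset_iff.2 h2), card_singleton]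
    congr 1
    omega

/-- The terms with `q a > k` vanish and those with `q a = k` contribute `C(n, n) = 1`, so the sum
for `r = k + 1` exhibits the number of `a` with `q a = k` and involves only smaller values
otherwise. -/
lemma sum_choose_eq_sum_range {γ : Type*} {n : ℕ} (hn : 0 < n) (k : ℕ) (Q : Finset γ) (q : γ → ℕ) :
    ∑ a ∈ Q, (n + (k + 1) - 1 - q a).choose n =
      ∑ j ∈ range k, (Q.filter fun a => q a = j).card * (n + (k + 1) - 1 - j).choose n +
        (Q.filter fun a => q a = k).card := by
  have h1 : ∑ a ∈ Q, (n + (k + 1) - 1 - q a).choose n =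
      ∑ a ∈ Q.filter (fun a => q a ∈ range (k + 1)), (n + (k + 1) - 1 - q a).choose n := by
    rw [sum_filter]
    refine sum_congr rfl fun a _ => ?_
    split_ifs with ha
    · rfl
    · rw [mem_range] at ha
      exact Nat.choose_eq_zero_of_lt (by omega)
  have h2 : ∀ j ∈ range (k + 1),
      ∑ a ∈ (Q.filter (fun a => q a ∈ range (k + 1))).filter (fun a => q a = j),
        (n + (k + 1) - 1 - q a).choose n =
      (Q.filter fun a => q a = j).card * (n + (k + 1) - 1 - j).choose n := by
    intro j hj
    rw [sum_congr rfl (g := fun _ => (n + (k + 1) - 1 - j).choose n)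
      (fun a ha => by rw [(mem_filter.1 ha).2]), sum_const, smul_eq_mul, filter_filter]
    congr 2
    refine filter_congr fun a _ => ?_
    constructor
    · exact fun h => h.2
    · rintro rfl; exact ⟨hj, rfl⟩
  rw [h1, ← sum_fiberwise_of_maps_to (g := q) (t := range (k + 1))
    (fun a ha => (mem_filter.1 ha).2), sum_congr rfl h2, sum_range_succ]
  rw [show n + (k + 1) - 1 - k = n by omega, Nat.choose_self, mul_one]

/-- The matrix `C(n + r - 1 - k, n)`, indexed by `r - 1` and `k`, is unitriangular, so the sums of
`C(n + r - 1 - p a, n)` for all `r` determine the distribution of the statistic `p`. -/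
lemma card_filter_eq_of_sum_choose {α β : Type*} {n : ℕ} (hn : 0 < n) (P : Finset α)
    (T : Finset β) (p : α → ℕ) (t : β → ℕ)
    (h : ∀ r, ∑ a ∈ P, (n + r - 1 - p a).choose n = ∑ b ∈ T, (n + r - 1 - t b).choose n)
    (k : ℕ) : (P.filter fun a => p a = k).card = (T.filter fun b => t b = k).card := by
  induction k using Nat.strong_induction_on with
  | _ k ih =>
  have hk := h (k + 1)
  rw [sum_choose_eq_sum_range hn, sum_choose_eq_sum_range hn,
    sum_congr rfl fun j hj => by rw [ih j (mem_range.1 hj)]] at hk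
  exact Nat.add_left_cancel hk

end

/-- For every positive integer `n`, every `S ⊆ {1,...,n-1}` and every `k`, the
number of permutations of `{1,...,n}` with `S ⊆ DES(π)` and `ides(π) = k`
equals the number of inversion tables of length `n` with `S ⊆ ASC(e)` and
`row(e) = k`. -/
theorem double_eulerian_superset (n : ℕ) (hn : 0 < n) (S : Finset ℕ)
    (hS : S ⊆ Finset.Icc 1 (n - 1)) (k : ℕ) :
    (Finset.univ.filter
      (fun π : Equiv.Perm (Fin n) => S ⊆ permDES n π ∧ permIdes n π = k)).card =
    (Finset.univ.filter
      (fun e : InvTable n => S ⊆ invASC n e ∧ invRow n e = k)).card := by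
  rw [← Finset.filter_filter, ← Finset.filter_filter]
  refine card_filter_eq_of_sum_choose hn _ _ _ _ (fun r => ?_) k
  rw [sum_perm_choose hn S hS, sum_invTable_row hn S hS]
end

section
/- For every positive integer n and every nonnegative integer k, the number of inversion tables of length n with asc(e) = k equals the number of inversion tables of length n with row(e) = k; that is, the statistics asc and row are equidistributed on the set of inversion tables of length n. -/
open PowerSeries

/-! ### Building tables by appending an entry -/

/-- Append the entry `j + 1` to an inversion table. -/
def InvTable.snoc {n : ℕ} (e : InvTable n) (j : Fin (n + 1)) : InvTable (n + 1) :=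
  ⟨Fin.snoc (α := fun _ => Fin (n + 2)) (fun i => (e.1 i).castSucc) j.succ, by
    intro i
    refine Fin.lastCases ?_ (fun i => ?_) i
    · simp only [Fin.snoc_last, Fin.val_succ, Fin.val_last]; omega
    · simpa using e.2 i⟩

lemma InvTable.snoc_castSucc {n : ℕ} (e : InvTable n) (j : Fin (n + 1)) (i : Fin n) :
    ((e.snoc j).1 i.castSucc : ℕ) = e.1 i := by
  simp [InvTable.snoc]

lemma InvTable.snoc_last {n : ℕ} (e : InvTable n) (j : Fin (n + 1)) :
    ((e.snoc j).1 (Fin.last n) : ℕ) = j + 1 := by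
  simp [InvTable.snoc]

/-- Removing the last entry inverts `InvTable.snoc`. -/
def InvTable.snocEquiv (n : ℕ) : InvTable n × Fin (n + 1) ≃ InvTable (n + 1) where
  toFun p := p.1.snoc p.2
  invFun e :=
    (⟨fun i => ⟨e.1 i.castSucc, by have := (e.2 i.castSucc).2; simp at this; omega⟩,
        fun i => e.2 i.castSucc⟩,
      ⟨(e.1 (Fin.last n) : ℕ) - 1, by have := (e.2 (Fin.last n)).2; simp at this; omega⟩)
  left_inv p := by
    obtain ⟨e, j⟩ := p
    refine Prod.ext (Subtype.ext (funext fun i => Fin.ext ?_)) (Fin.ext ?_)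
    · exact e.snoc_castSucc j i
    · simp [InvTable.snoc_last]
  right_inv e := by
    refine Subtype.ext (funext fun i => Fin.ext ?_)
    refine Fin.lastCases ?_ (fun i => ?_) i
    · rw [InvTable.snoc_last]
      have := (e.2 (Fin.last n)).1
      simp only
      omega
    · rw [InvTable.snoc_castSucc]

lemma InvTable.sum_succ {n : ℕ} {M : Type*} [AddCommMonoid M] (f : InvTable (n + 1) → M) :
    ∑ e, f e = ∑ e : InvTable n, ∑ j : Fin (n + 1), f (e.snoc j) := by
  rw [← (InvTable.snocEquiv n).sum_comp, Fintype.sum_prod_type]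
  rfl

instance : Unique (InvTable 0) where
  default := ⟨fun i => i.elim0, fun i => i.elim0⟩
  uniq _ := Subtype.ext (funext fun i => i.elim0)

/-! ### Appending an entry and the statistic `row` -/

lemma one_notMem_invROW {n : ℕ} (e : InvTable n) : 1 ∉ invROW n e := by
  simp [invROW]

lemma invROW_snoc {n : ℕ} (e : InvTable n) (j : Fin (n + 1)) :
    invROW (n + 1) (e.snoc j) =
      if (j : ℕ) + 1 ∈ insert 1 (invROW n e) then invROW n e
      else insert ((j : ℕ) + 1) (invROW n e) := by
  have h : invROW (n + 1) (e.snoc j) = (insert ((j : ℕ) + 1)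
      (Finset.image (fun i : Fin n => (e.1 i : ℕ)) Finset.univ)) \ {1} := by
    ext x
    simp only [invROW, Finset.mem_sdiff, Finset.mem_image, Finset.mem_univ, true_and,
      Finset.mem_insert, Finset.mem_singleton]
    rw [Fin.exists_fin_succ']
    simp only [InvTable.snoc_castSucc, InvTable.snoc_last]
    grind
  rw [h]
  ext x
  simp only [invROW]
  grind

lemma invRow_snoc {n : ℕ} (e : InvTable n) (j : Fin (n + 1)) :
    invRow (n + 1) (e.snoc j) =
      if (j : ℕ) + 1 ∈ insert 1 (invROW n e) then invRow n e else invRow n e + 1 := by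
  rw [invRow, invROW_snoc]
  split_ifs with h
  · rfl
  · rw [Finset.card_insert_of_notMem (fun h' => h (Finset.mem_insert_of_mem h'))]
    rfl

/-- Exactly `row e + 1` choices of the appended entry leave `row` unchanged. -/
lemma card_old_values {n : ℕ} (e : InvTable n) :
    (Finset.univ.filter fun j : Fin (n + 1) => (j : ℕ) + 1 ∈ insert 1 (invROW n e)).card
      = invRow n e + 1 := by
  rw [invRow, ← Finset.card_insert_of_notMem (one_notMem_invROW e)]
  refine Finset.card_bij (fun j _ => (j : ℕ) + 1) ?_ ?_ ?_
  · intro j hj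
    exact (Finset.mem_filter.1 hj).2
  · intro a _ b _ h
    exact Fin.ext (by simpa using h)
  · intro b hb
    have hb' : 1 ≤ b ∧ b ≤ n + 1 := by
      rcases Finset.mem_insert.1 hb with rfl | h
      · omega
      · simp only [invROW, Finset.mem_sdiff, Finset.mem_image, Finset.mem_univ, true_and] at h
        obtain ⟨⟨i, rfl⟩, -⟩ := h
        have := e.2 i
        omega
    have hb'' : b - 1 + 1 = b := by omega
    refine ⟨⟨b - 1, by omega⟩, ?_, hb''⟩
    simp only [Finset.mem_filter, Finset.mem_univ, true_and, hb'']
    exact hb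

/-- The generating function `∑ X ^ row e` over inversion tables of length `n`. -/
noncomputable def rowGF (n : ℕ) : ℤ⟦X⟧ := ∑ e : InvTable n, X ^ invRow n e

lemma X_mul_deriv_X_pow (r : ℕ) : (X : ℤ⟦X⟧) * d⁄dX ℤ (X ^ r) = (r : ℤ⟦X⟧) * X ^ r := by
  rw [Derivation.leibniz_pow, PowerSeries.derivative_X]
  cases r with
  | zero => simp
  | succ r => simp [pow_succ]; ring

lemma rowGF_succ (n : ℕ) :
    rowGF (n + 1) = (1 + (n : ℤ⟦X⟧) * X) * rowGF n + X * (1 - X) * d⁄dX ℤ (rowGF n) := by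
  rw [rowGF, InvTable.sum_succ, rowGF, map_sum, Finset.mul_sum, Finset.mul_sum,
    ← Finset.sum_add_distrib]
  refine Finset.sum_congr rfl fun e _ => ?_
  have hnew := Finset.card_filter_add_card_filter_not (s := (Finset.univ : Finset (Fin (n + 1))))
    (fun j => (j : ℕ) + 1 ∈ insert 1 (invROW n e))
  rw [card_old_values, Finset.card_univ, Fintype.card_fin] at hnew
  have hnew' : (invRow n e : ℤ⟦X⟧) + 1 + ((Finset.univ.filter fun j : Fin (n + 1) =>
      ¬ (j : ℕ) + 1 ∈ insert 1 (invROW n e)).card : ℤ⟦X⟧) = n + 1 := by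
    have := congrArg (Nat.cast : ℕ → ℤ⟦X⟧) hnew
    push_cast at this
    exact this
  have hd := X_mul_deriv_X_pow (invRow n e)
  simp only [invRow_snoc, apply_ite (fun r : ℕ => (X : ℤ⟦X⟧) ^ r)]
  rw [Finset.sum_ite, Finset.sum_const, Finset.sum_const, card_old_values, nsmul_eq_mul,
    nsmul_eq_mul]
  push_cast
  linear_combination (X : ℤ⟦X⟧) ^ (invRow n e + 1) * hnew' - (1 - X) * hd

/-! ### The Eulerian series -/

/-- The series `∑ m, m ^ j (m + 1) ^ (N - j) X ^ m`, meant for `j ≤ N`, with `0 ^ 0 = 1`. -/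
noncomputable def B (N j : ℕ) : ℤ⟦X⟧ := mk fun m => (m : ℤ) ^ j * (m + 1) ^ (N - j)

lemma B_telescope {N i : ℕ} (h : i ≤ N) : B (N + 1) i - B (N + 1) (i + 1) = B N i := by
  ext m
  obtain ⟨d, rfl⟩ := Nat.exists_eq_add_of_le h
  have h1 : i + d + 1 - i = d + 1 := by omega
  have h2 : i + d + 1 - (i + 1) = d := by omega
  have h3 : i + d - i = d := by omega
  simp only [B, map_sub, coeff_mk, h1, h2, h3]
  ring

lemma X_mul_B_zero (N : ℕ) : X * B (N + 1) 0 = B (N + 1) (N + 1) := by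
  ext m
  cases m with
  | zero => simp [B]
  | succ m => simp [B, coeff_succ_X_mul]

lemma sum_B {N j : ℕ} (h : j ≤ N + 1) :
    ∑ i ∈ Finset.range j, B N i = B (N + 1) 0 - B (N + 1) j := by
  induction j with
  | zero => simp
  | succ j ih =>
    rw [Finset.sum_range_succ, ih (by omega), ← B_telescope (by omega : j ≤ N)]
    ring

/-- The series `(1 - X) * B (N + 1) j` satisfies the recurrence for appending the entry `j + 1`:
a previous entry below `j + 1` creates an ascent and so contributes a factor `X`. -/
lemma sum_ite_B {N j : ℕ} (h : j ≤ N + 1) :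
    ∑ i ∈ Finset.range (N + 1), (if i < j then X else 1) * B N i = (1 - X) * B (N + 1) j := by
  have hsplit : ∀ i, (if i < j then X else 1) * B N i
      = B N i - (1 - X) * (if i < j then B N i else 0) := by
    intro i
    split_ifs <;> ring
  have hfilter : (Finset.range (N + 1)).filter (· < j) = Finset.range j := by
    ext i
    simp only [Finset.mem_filter, Finset.mem_range]
    omega
  simp only [hsplit]
  rw [Finset.sum_sub_distrib, ← Finset.mul_sum, ← Finset.sum_filter, hfilter, sum_B h,
    sum_B le_rfl, ← X_mul_B_zero]
  ring

/-- The operator `1 + X d/dX` multiplies the coefficient of `X ^ m` by `m + 1`. -/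
lemma B_succ_zero (n : ℕ) : B (n + 1) 0 = B n 0 + X * d⁄dX ℤ (B n 0) := by
  ext m
  cases m with
  | zero => simp [B]
  | succ m =>
    simp [B, coeff_succ_X_mul, coeff_derivative]
    ring

lemma rowGF_eq (n : ℕ) : rowGF n = (1 - X) ^ (n + 1) * B n 0 := by
  induction n with
  | zero =>
    have h : B 0 0 = mk 1 := by ext m; simp [B]
    have h1 := PowerSeries.mk_one_mul_one_sub_eq_one ℤ
    rw [h, zero_add, pow_one, mul_comm, h1, rowGF, Fintype.sum_unique]
    simp [invRow, invROW]
  | succ n ih =>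
    rw [rowGF_succ, ih, B_succ_zero, Derivation.leibniz, Derivation.leibniz_pow]
    simp only [map_sub, Derivation.map_one_eq_zero, PowerSeries.derivative_X, smul_eq_mul,
      nsmul_eq_mul, Nat.add_sub_cancel]
    push_cast
    ring

/-! ### Appending an entry and the statistic `asc` -/

lemma invAsc_eq_card {n : ℕ} (e : InvTable (n + 1)) :
    invAsc (n + 1) e =
      ∑ i : Fin n, if (e.1 i.castSucc : ℕ) < e.1 i.succ then 1 else 0 := by
  rw [← Finset.card_filter, invAsc]
  symm
  refine Finset.card_bij (fun i _ => (i : ℕ) + 1) ?_ ?_ ?_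
  · intro i hi
    have hi' := (Finset.mem_filter.1 hi).2
    simp only [invASC, Finset.mem_filter, Finset.mem_Ico]
    exact ⟨⟨by omega, by omega⟩, by omega, by omega, hi'⟩
  · intro a _ b _ h
    exact Fin.ext (by simpa using h)
  · intro b hb
    simp only [invASC, Finset.mem_filter, Finset.mem_Ico] at hb
    obtain ⟨⟨h1, h2⟩, h3, h4, h5⟩ := hb
    obtain ⟨c, rfl⟩ := Nat.exists_eq_add_of_le' h1
    exact ⟨⟨c, by omega⟩, Finset.mem_filter.2 ⟨Finset.mem_univ _, h5⟩, rfl⟩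

lemma invAsc_snoc {n : ℕ} (e : InvTable (n + 1)) (j : Fin (n + 2)) :
    invAsc (n + 2) (e.snoc j) =
      invAsc (n + 1) e + if (e.1 (Fin.last n) : ℕ) < j + 1 then 1 else 0 := by
  rw [invAsc_eq_card, invAsc_eq_card, Fin.sum_univ_castSucc]
  simp only [Fin.succ_castSucc, Fin.succ_last, InvTable.snoc_castSucc, InvTable.snoc_last]

/-- The generating function of `asc` over inversion tables of length `N + 1` with last entry
`j + 1`. -/
noncomputable def lastGF (N j : ℕ) : ℤ⟦X⟧ :=
  ∑ e : InvTable (N + 1), if (e.1 (Fin.last N) : ℕ) = j + 1 then X ^ invAsc (N + 1) e else 0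

/-- Splitting a sum over tables according to the last entry. -/
lemma sum_mul_lastGF (N : ℕ) (c : ℕ → ℤ⟦X⟧) :
    ∑ i ∈ Finset.range (N + 1), c i * lastGF N i
      = ∑ e : InvTable (N + 1), c ((e.1 (Fin.last N) : ℕ) - 1) * X ^ invAsc (N + 1) e := by
  simp only [lastGF, Finset.mul_sum]
  rw [Finset.sum_comm]
  refine Finset.sum_congr rfl fun e _ => ?_
  have h := e.2 (Fin.last N)
  rw [Fin.val_last] at h
  rw [Finset.sum_eq_single ((e.1 (Fin.last N) : ℕ) - 1)]
  · rw [if_pos (by omega)]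
  · intro b _ hb
    rw [if_neg (by omega), mul_zero]
  · intro hb
    exact absurd (Finset.mem_range.2 (by omega)) hb

lemma lastGF_succ {N j : ℕ} (hj : j ≤ N + 1) :
    lastGF (N + 1) j = ∑ i ∈ Finset.range (N + 1), (if i < j then X else 1) * lastGF N i := by
  rw [sum_mul_lastGF N (fun i => if i < j then X else 1), lastGF, InvTable.sum_succ]
  refine Finset.sum_congr rfl fun e _ => ?_
  have h := e.2 (Fin.last N)
  rw [Finset.sum_eq_single (⟨j, by omega⟩ : Fin (N + 2))]
  · rw [InvTable.snoc_last, if_pos rfl, invAsc_snoc]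
    by_cases hlt : (e.1 (Fin.last N) : ℕ) < j + 1
    · rw [if_pos hlt, if_pos (by omega), pow_succ']
    · rw [if_neg hlt, if_neg (by omega), one_mul, add_zero]
  · intro b _ hb
    rw [InvTable.snoc_last, if_neg]
    intro h'
    exact hb (Fin.ext (by simpa using h'))
  · intro hb
    exact absurd (Finset.mem_univ _) hb

lemma lastGF_eq {N j : ℕ} (hj : j ≤ N) : lastGF N j = (1 - X) ^ (N + 1) * B N j := by
  induction N generalizing j with
  | zero =>
    obtain rfl : j = 0 := by omega
    have h : rowGF 0 = 1 := by
      rw [rowGF, Fintype.sum_unique]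
      simp [invRow, invROW]
    rw [← rowGF_eq, h, lastGF, InvTable.sum_succ, Fintype.sum_unique,
      Fin.sum_univ_castSucc, Finset.univ_eq_empty,
      Finset.sum_empty, zero_add (M := ℤ⟦X⟧), InvTable.snoc_last, if_pos (by simp)]
    simp [invAsc, invASC]
  | succ N ih =>
    rw [lastGF_succ hj]
    have : ∀ i ∈ Finset.range (N + 1), (if i < j then X else 1) * lastGF N i
        = (1 - X) ^ (N + 1) * ((if i < j then X else 1) * B N i) := by
      intro i hi
      rw [ih (by have := Finset.mem_range.1 hi; omega)]
      ring
    rw [Finset.sum_congr rfl this, ← Finset.mul_sum, sum_ite_B hj]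
    ring

lemma ascGF_eq (N : ℕ) :
    ∑ e : InvTable (N + 1), (X : ℤ⟦X⟧) ^ invAsc (N + 1) e = (1 - X) ^ (N + 2) * B (N + 1) 0 := by
  have h := sum_mul_lastGF N (fun _ => 1)
  simp only [one_mul] at h
  rw [← h, Finset.sum_congr rfl fun i hi =>
    lastGF_eq (Nat.lt_succ_iff.1 (Finset.mem_range.1 hi)), ← Finset.mul_sum, sum_B le_rfl,
    ← X_mul_B_zero]
  ring

lemma coeff_sum_X_pow {α : Type*} [Fintype α] (f : α → ℕ) (k : ℕ) :
    coeff k (∑ e, (X : ℤ⟦X⟧) ^ f e) = ((Finset.univ.filter fun e => f e = k).card : ℤ) := by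
  simp [coeff_X_pow, eq_comm]

/-- The statistics `asc` and `row` are equidistributed on the set of inversion
tables of length `n`. -/
theorem asc_row_equidistributed (n : ℕ) (hn : 0 < n) (k : ℕ) :
    (Finset.univ.filter (fun e : InvTable n => invAsc n e = k)).card =
    (Finset.univ.filter (fun e : InvTable n => invRow n e = k)).card := by
  obtain ⟨N, rfl⟩ := Nat.exists_eq_add_of_le' hn
  have h : ∑ e : InvTable (N + 1), (X : ℤ⟦X⟧) ^ invAsc (N + 1) e
      = ∑ e : InvTable (N + 1), (X : ℤ⟦X⟧) ^ invRow (N + 1) e :=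
    (ascGF_eq N).trans (rowGF_eq (N + 1)).symm
  have hk := congrArg (coeff k) h
  rw [coeff_sum_X_pow, coeff_sum_X_pow] at hk
  exact_mod_cast hk
end

section
/- For every positive integer n and every nonnegative integer k, the number of inversion tables e of length n with asc(e) = k equals the number of permutations π of {1,...,n} with des(π) = k (the Eulerian number). -/
/-- The positions to the left of `i` that hold a larger value than `π` has at `i`. -/
def leftLarger {n : ℕ} (π : Equiv.Perm (Fin n)) (i : Fin n) : Finset (Fin n) :=
  Finset.univ.filter fun j => j < i ∧ π i < π j

theorem mem_leftLarger {n : ℕ} {π : Equiv.Perm (Fin n)} {i j : Fin n} :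
    j ∈ leftLarger π i ↔ j < i ∧ π i < π j := by
  simp [leftLarger]

theorem card_leftLarger_le {n : ℕ} (π : Equiv.Perm (Fin n)) (i : Fin n) :
    (leftLarger π i).card ≤ i := by
  have h : leftLarger π i ⊆ Finset.Iio i := fun j hj =>
    Finset.mem_Iio.2 (mem_leftLarger.1 hj).1
  simpa using Finset.card_le_card h

/-- The Lehmer code of `π`, shifted by one so that its entry at the 0-indexed position `i` lies in
`{1, ..., i + 1}`. -/
def lehmer {n : ℕ} (π : Equiv.Perm (Fin n)) : InvTable n :=
  ⟨fun i => ⟨(leftLarger π i).card + 1, by have := card_leftLarger_le π i; omega⟩,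
    fun i => by have := card_leftLarger_le π i; constructor <;> simp; omega⟩

/-- For adjacent positions `a` and `b = a + 1`, the code ascends exactly where `π` descends. -/
theorem card_leftLarger_lt_iff {n : ℕ} (π : Equiv.Perm (Fin n)) {a b : Fin n}
    (hab : (a : ℕ) + 1 = b) :
    (leftLarger π a).card < (leftLarger π b).card ↔ π b < π a := by
  constructor
  · intro h
    by_contra hba
    refine absurd (Finset.card_le_card ?_) (not_le.2 h)
    intro j hj
    rw [mem_leftLarger] at hj ⊢
    have hja : j ≠ a := by rintro rfl; exact hba hj.2
    have : (j : ℕ) ≠ a := fun h => hja (Fin.ext h)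
    refine ⟨?_, (not_lt.1 hba).trans_lt hj.2⟩
    have := Fin.lt_def.1 hj.1
    exact Fin.lt_def.2 (by omega)
  · intro h
    have hab' : a < b := Fin.lt_def.2 (by omega)
    apply Finset.card_lt_card
    rw [Finset.ssubset_iff_of_subset]
    · exact ⟨a, mem_leftLarger.2 ⟨hab', h⟩, fun ha => lt_irrefl _ (mem_leftLarger.1 ha).1⟩
    · intro j hj
      rw [mem_leftLarger] at hj ⊢
      exact ⟨hj.1.trans hab', h.trans hj.2⟩

theorem invASC_lehmer {n : ℕ} (π : Equiv.Perm (Fin n)) : invASC n (lehmer π) = permDES n π := by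
  unfold invASC permDES
  refine Finset.filter_congr fun i hi => ?_
  rw [Finset.mem_Ico] at hi
  refine exists_congr fun h => exists_congr fun h' => ?_
  rw [← card_leftLarger_lt_iff π (a := ⟨i - 1, h'⟩) (b := ⟨i, h⟩) (by simp; omega)]
  simp [lehmer]

/-- Permutations with equal codes induce the same relative order on each initial segment. -/
theorem lt_iff_lt_of_card_leftLarger_eq {n : ℕ} {π σ : Equiv.Perm (Fin n)}
    (h : ∀ i, (leftLarger π i).card = (leftLarger σ i).card) (m : ℕ) :
    ∀ a b : Fin n, (a : ℕ) < m → (b : ℕ) < m → (π a < π b ↔ σ a < σ b) := by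
  induction m with
  | zero => intro a b ha; omega
  | succ m ih =>
    -- The sets for `π` and `σ` at position `m` are up-sets of the same chain,
    -- so one contains the other; having the same size, they coincide.
    have key : ∀ i : Fin n, (i : ℕ) = m → leftLarger π i = leftLarger σ i := by
      intro i hi
      have hsub : leftLarger π i ⊆ leftLarger σ i ∨ leftLarger σ i ⊆ leftLarger π i := by
        by_contra! hcon
        obtain ⟨a, ha, ha'⟩ := Finset.not_subset.1 hcon.1
        obtain ⟨b, hb, hb'⟩ := Finset.not_subset.1 hcon.2
        rw [mem_leftLarger] at ha ha' hb hb'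
        have h1 := Fin.lt_def.1 ha.1
        have h2 := Fin.lt_def.1 hb.1
        have h3 : π b ≤ π i := not_lt.1 fun hlt => hb' ⟨hb.1, hlt⟩
        have h4 : σ a ≤ σ i := not_lt.1 fun hlt => ha' ⟨ha.1, hlt⟩
        have h5 := (ih b a (by omega) (by omega)).1 (h3.trans_lt ha.2)
        exact lt_asymm h5 (h4.trans_lt hb.2)
      rcases hsub with hs | hs
      · exact Finset.eq_of_subset_of_card_le hs (h i).ge
      · exact (Finset.eq_of_subset_of_card_le hs (h i).le).symm
    have key' : ∀ i j : Fin n, (i : ℕ) = m → (j : ℕ) < m → (π i < π j ↔ σ i < σ j) := by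
      intro i j hi hj
      have hji : j < i := Fin.lt_def.2 (by omega)
      have := congrArg (j ∈ ·) (key i hi)
      simpa [mem_leftLarger, hji] using this
    intro a b ha hb
    rcases Nat.lt_succ_iff_lt_or_eq.1 ha with ha | ha <;>
      rcases Nat.lt_succ_iff_lt_or_eq.1 hb with hb | hb
    · exact ih a b ha hb
    · have hne : a ≠ b := by rintro rfl; omega
      have hπ : π a ≠ π b := π.injective.ne hne
      have hσ : σ a ≠ σ b := σ.injective.ne hne
      have := key' b a hb ha
      rw [← not_iff_not, not_lt, not_lt] at this
      rwa [hπ.le_iff_lt, hσ.le_iff_lt] at this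
    · exact key' a b ha hb
    · obtain rfl : a = b := Fin.ext (by omega)
      simp

theorem lehmer_injective (n : ℕ) :
    Function.Injective (lehmer : Equiv.Perm (Fin n) → InvTable n) := by
  intro π σ h
  have hc : ∀ i, (leftLarger π i).card = (leftLarger σ i).card := fun i => by
    have := congrArg (fun e : InvTable n => (e.1 i : ℕ)) h
    simpa [lehmer] using this
  have hlt := fun a b : Fin n => lt_iff_lt_of_card_leftLarger_eq hc n a b a.2 b.2
  -- `σ ∘ π⁻¹` is an increasing bijection of `Fin n`, hence the identity.
  have hmono : StrictMono (σ ∘ π.symm) := fun a b hab =>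
    (hlt (π.symm a) (π.symm b)).1 (by simpa using hab)
  have hid : σ ∘ π.symm = id := (hmono.range_inj strictMono_id).1 (by
    rw [(σ.surjective.comp π.symm.surjective).range_eq, Set.range_id])
  ext i
  have := congrFun hid (π i)
  simp at this
  rw [this]

theorem card_invTable (n : ℕ) : Fintype.card (InvTable n) = n.factorial := by
  let f : InvTable n ≃ ((i : Fin n) → Fin ((i : ℕ) + 1)) :=
    { toFun := fun e i => ⟨(e.1 i : ℕ) - 1, by have := e.2 i; omega⟩
      invFun := fun g => ⟨fun i => ⟨(g i : ℕ) + 1, by have := (g i).2; omega⟩,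
        fun i => by have := (g i).2; constructor <;> simp; omega⟩
      left_inv := fun e => by
        ext i
        have := e.2 i
        simp; omega
      right_inv := fun g => by ext i; simp }
  rw [Fintype.card_congr f, Fintype.card_pi]
  simp only [Fintype.card_fin]
  rw [Fin.prod_univ_eq_prod_range (fun i => i + 1) n, Finset.prod_range_add_one_eq_factorial]

theorem lehmer_bijective (n : ℕ) :
    Function.Bijective (lehmer : Equiv.Perm (Fin n) → InvTable n) := by
  rw [Fintype.bijective_iff_injective_and_card]
  exact ⟨lehmer_injective n, by rw [card_invTable, Fintype.card_perm, Fintype.card_fin]⟩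

/-- The number of inversion tables of length `n` with `asc(e) = k` equals the
number of permutations of `{1,...,n}` with `des(π) = k` (the Eulerian number). -/
theorem asc_eulerian (n : ℕ) (hn : 0 < n) (k : ℕ) :
    (Finset.univ.filter (fun e : InvTable n => invAsc n e = k)).card =
    (Finset.univ.filter (fun π : Equiv.Perm (Fin n) => permDes n π = k)).card := by
  symm
  refine Finset.card_bijective lehmer (lehmer_bijective n) fun π => ?_
  rw [Finset.mem_filter, Finset.mem_filter, invAsc, permDes, invASC_lehmer]
  simp
end
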